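/- (Minimax lower bound for estimating the likelihood ratio.) For every α ∈ (0,1) and every 0 < β < α/2 there exists a constant C(α,β), depending only on (α,β), such that for every n ≥ max(4, (12α)^{1/(1−α)}), every 0 < C ≤ 1/(64π Γ(1−α)), every C' > C(α,β), every measurable estimator T̂ : ℕ^n → ℝ, and every measurable h : ℝ → ℝ, one has sup over P ∈ Σ(α,β,C,C') of P_P( √(n^α L_α(P)) · ℓ(T̂(X_n), T(P;X_n)) > √C · min( 1/(8√(6α)), n^{α/2}/2 ) ) ≥ 1/4. -/

import Mathlib

open MeasureTheory ProbabilityTheory Real Filter ENNReal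

noncomputable section

/-- The law of an i.i.d. sample of size `n` from the discrete distribution `P` on `ℕ`. -/
def sampleMeasure (P : PMF ℕ) (n : ℕ) : Measure (Fin n → ℕ) :=
  Measure.pi fun _ => P.toMeasure

/-- The probability mass of symbol `j` under `P`, as a real number. -/
def pReal (P : PMF ℕ) (j : ℕ) : ℝ := (P j).toReal

/-- Empirical frequency of the symbol `j` in the sample `ω`. -/
def freq {n : ℕ} (ω : Fin n → ℕ) (j : ℕ) : ℕ :=
  (Finset.univ.filter fun i => ω i = j).card

/-- The `r`-order missing mass `θ_r(P; X_n)`. -/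
def missingMass (p : ℕ → ℝ) (r : ℕ) {n : ℕ} (ω : Fin n → ℕ) : ℝ :=
  ∑' j, p j ^ r * (if freq ω j = 0 then 1 else 0)

/-- `M_{n,r}`: the number of distinct symbols appearing exactly `r` times in the sample. -/
def Mcount {n : ℕ} (ω : Fin n → ℕ) (r : ℕ) : ℝ :=
  ∑' j, if freq ω j = r then 1 else 0

/-- The Good–Turing-type estimator `θ̂_r^{GT}(X_n) = M_{n,r} / (n choose r)`. -/
def gtEst {n : ℕ} (ω : Fin n → ℕ) (r : ℕ) : ℝ := Mcount ω r / (n.choose r)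

/-- The multiplicative (relative) loss: `ℓ(t, θ) = |t/θ - 1|` if `θ > 0`, and `h t` otherwise. -/
def mloss (h : ℝ → ℝ) (t θ : ℝ) : ℝ := if 0 < θ then |t / θ - 1| else h t

/-- The tail function `F̄_P(x) = #{j : p_j > x}`. -/
def tailF (P : PMF ℕ) (x : ℝ) : ℕ := Set.ncard {j | x < pReal P j}

/-- `P ∈ Σ(α,β,C,C')` with `Lα = L_α(P) = lim_{x→0} x^α F̄_P(x)`. -/
def inSigmaClass (α β C C' : ℝ) (P : PMF ℕ) (Lα : ℝ) : Prop :=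
  Tendsto (fun x => x ^ α * (tailF P x : ℝ)) (nhdsWithin 0 (Set.Ioi 0)) (nhds Lα) ∧
  C ≤ Lα ∧
  ∀ x ∈ Set.Ioo (0 : ℝ) 1,
    x ^ (-β) * |(tailF P x : ℝ) / (Lα * x ^ (-α)) - 1| ≤ C'

/-- The likelihood ratio `T(P;X_n) = θ_1(P;X_n) / θ_2(P;X_n)` of the rare-type match problem. -/
def likelihoodRatio (p : ℕ → ℝ) {n : ℕ} (ω : Fin n → ℕ) : ℝ :=
  missingMass p 1 ω / missingMass p 2 ω

/-!
The proof is a two-point argument. Both laws have weights `j ^ (-1 / α)` from a fixed index on, and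
the second one has its weights beyond a cutoff `J ≍ n ^ α` multiplied by `1 + δ` with
`δ ≍ n ^ (-α / 2)`; the excess is taken from the mass at `0`. The χ²-divergence of the two laws is
of order `δ ^ 2 * J / n ≍ n⁻¹`, so the samples cannot be told apart. Symbols much more frequent than
`1 / n` contribute little to `θ₂`, so with high probability most of the unseen mass `θ₂` lies beyond
`J`; there `θ₁` grows by at most the factor `1 + δ` and `θ₂` by `(1 + δ) ^ 2`, which moves `θ₁ / θ₂`
by a relative amount of order `δ`. This settles all large `n`. For the remaining `n` one uses two
power laws which start so late that the constant sample `0` has probability at least `1 / 4` under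
both, while their likelihood ratios at that sample differ by a factor larger than `3`.
-/

section PowerSums

lemma sum_range_rpow_le {c : ℝ} (hc : 0 ≤ c) (J : ℕ) :
    ∑ j ∈ Finset.range J, (j : ℝ) ^ c ≤ (J : ℝ) ^ (c + 1) / (c + 1) := by
  have hmono : MonotoneOn (fun x : ℝ => x ^ c) (Set.Icc 0 (0 + (J : ℕ))) :=
    fun x hx y _ hxy => rpow_le_rpow hx.1 hxy hc
  have hle := hmono.sum_le_integral
  simp only [zero_add] at hle
  rwa [integral_rpow (Or.inl (by linarith)), zero_rpow (by linarith), sub_zero] at hle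

/-- The sequence `j ↦ j ^ (-a)` restricted to `j ≥ J`. -/
def powerTail (a : ℝ) (J : ℕ) : ℕ → ℝ := (Set.Ici J).indicator fun j => (j : ℝ) ^ (-a)

/-- The total mass `∑_{j ≥ J} j ^ (-a)` of a power tail. -/
def tailMass (a : ℝ) (J : ℕ) : ℝ := ∑' j, powerTail a J j

variable {a : ℝ} {m J j : ℕ}

lemma powerTail_of_le (h : J ≤ j) : powerTail a J j = (j : ℝ) ^ (-a) :=
  Set.indicator_of_mem (Set.mem_Ici.2 h) _

lemma powerTail_of_lt (h : j < J) : powerTail a J j = 0 :=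
  Set.indicator_of_notMem (by simpa using h) _

lemma powerTail_nonneg (a : ℝ) (J j : ℕ) : 0 ≤ powerTail a J j :=
  Set.indicator_nonneg (fun _ _ => by positivity) j

lemma powerTail_le (a : ℝ) (J j : ℕ) : powerTail a J j ≤ (j : ℝ) ^ (-a) :=
  Set.indicator_le_self' (fun _ _ => by positivity) j

lemma powerTail_anti (h : m ≤ J) (j : ℕ) : powerTail a J j ≤ powerTail a m j :=
  Set.indicator_le_indicator_of_subset (Set.Ici_subset_Ici.2 h) (fun _ => by positivity) j

lemma powerTail_sq (a : ℝ) (J j : ℕ) : powerTail a J j ^ 2 = powerTail (2 * a) J j := by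
  rcases le_or_gt J j with h | h
  · rw [powerTail_of_le h, powerTail_of_le h, ← Real.rpow_mul_natCast (by positivity)]
    congr 1
    push_cast
    ring
  · rw [powerTail_of_lt h, powerTail_of_lt h, zero_pow two_ne_zero]

lemma summable_powerTail (ha : 1 < a) (J : ℕ) : Summable (powerTail a J) :=
  .of_nonneg_of_le (powerTail_nonneg a J) (powerTail_le a J)
    (summable_nat_rpow.2 (by linarith))

lemma powerTail_le_one (ha : 0 ≤ a) (hJ : 1 ≤ J) (j : ℕ) : powerTail a J j ≤ 1 := by
  rcases le_or_gt J j with h | h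
  · rw [powerTail_of_le h]
    exact rpow_le_one_of_one_le_of_nonpos (by exact_mod_cast hJ.trans h) (by linarith)
  · rw [powerTail_of_lt h]
    exact zero_le_one

lemma summable_powerTail_pow (ha : 1 < a) (J : ℕ) {r : ℕ} (hr : r ≠ 0) :
    Summable fun j => powerTail a J j ^ r := by
  have hr' : (1 : ℝ) ≤ r := by exact_mod_cast Nat.one_le_iff_ne_zero.2 hr
  refine .of_nonneg_of_le (fun j => pow_nonneg (powerTail_nonneg a J j) r)
    (fun j => pow_le_pow_left₀ (powerTail_nonneg a J j) (powerTail_le a J j) r) ?_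
  simp only [← Real.rpow_mul_natCast (Nat.cast_nonneg _)]
  exact summable_nat_rpow.2 (by nlinarith)

lemma tailMass_nonneg (a : ℝ) (J : ℕ) : 0 ≤ tailMass a J := tsum_nonneg (powerTail_nonneg a J)

lemma tailMass_anti (ha : 1 < a) (h : m ≤ J) : tailMass a J ≤ tailMass a m :=
  (summable_powerTail ha J).tsum_le_tsum (powerTail_anti h) (summable_powerTail ha m)

lemma tailMass_eq_tsum_add (ha : 1 < a) (J : ℕ) :
    tailMass a J = ∑' i : ℕ, ((J + i : ℕ) : ℝ) ^ (-a) := by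
  rw [tailMass, ← (summable_powerTail ha J).sum_add_tsum_nat_add J, Finset.sum_eq_zero
    fun i hi => powerTail_of_lt (Finset.mem_range.1 hi), zero_add]
  exact tsum_congr fun i => by rw [add_comm, powerTail_of_le (Nat.le_add_right J i)]

lemma tendsto_tailMass (ha : 1 < a) : Tendsto (tailMass a) atTop (nhds 0) := by
  simpa only [← add_comm, ← tailMass_eq_tsum_add ha] using
    tendsto_sum_nat_add fun i : ℕ => (i : ℝ) ^ (-a)

lemma antitoneOn_rpow_neg (ha : 0 ≤ a) (hJ : 1 ≤ J) (N : ℕ) :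
    AntitoneOn (fun x : ℝ => x ^ (-a)) (Set.Icc J (J + N)) := by
  have hJ' : (0 : ℝ) < J := by exact_mod_cast hJ
  exact fun x hx y _ hxy => rpow_le_rpow_of_nonpos (hJ'.trans_le hx.1) hxy (by linarith)

lemma integral_rpow_neg (ha : 1 < a) (hJ : 1 ≤ J) (N : ℕ) :
    ∫ x in (J : ℝ)..J + N, x ^ (-a) =
      (J : ℝ) ^ (1 - a) / (a - 1) - ((J : ℝ) + N) ^ (1 - a) / (a - 1) := by
  have hJ' : (0 : ℝ) < J := by exact_mod_cast hJ
  rw [integral_rpow (Or.inr ⟨by linarith, Set.notMem_uIcc_of_lt hJ' (by positivity)⟩),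
    neg_add_eq_sub, ← neg_sub a 1, div_neg, ← neg_div, neg_sub, sub_div]

lemma tailMass_le (ha : 1 < a) (hJ : 1 ≤ J) :
    tailMass a J ≤ (J : ℝ) ^ (-a) + (J : ℝ) ^ (1 - a) / (a - 1) := by
  rw [tailMass_eq_tsum_add ha,
    ← tsum_congr fun i => congrArg (fun k : ℕ => (k : ℝ) ^ (-a)) (add_comm i J),
    ((summable_nat_add_iff J).2 (summable_nat_rpow.2 (by linarith))).tsum_eq_zero_add, zero_add]
  gcongr
  refine tsum_le_of_sum_range_le (fun _ => by positivity) fun N => ?_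
  have hsum := (antitoneOn_rpow_neg (by linarith) hJ N).sum_le_integral
  rw [integral_rpow_neg ha hJ] at hsum
  have hnonneg : 0 ≤ ((J : ℝ) + N) ^ (1 - a) / (a - 1) := div_nonneg (by positivity) (by linarith)
  push_cast at hsum ⊢
  simp only [add_comm _ (J : ℝ)]
  linarith

lemma le_tailMass (ha : 1 < a) (hJ : 1 ≤ J) : (J : ℝ) ^ (1 - a) / (a - 1) ≤ tailMass a J := by
  have hbound (N : ℕ) :
      (J : ℝ) ^ (1 - a) / (a - 1) - ((J : ℝ) + N) ^ (1 - a) / (a - 1) ≤ tailMass a J := by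
    rw [← integral_rpow_neg ha hJ, tailMass_eq_tsum_add ha]
    refine (antitoneOn_rpow_neg (by linarith) hJ N).integral_le_sum.trans ?_
    simp only [← Nat.cast_add]
    exact Summable.sum_le_tsum _ (fun _ _ => by positivity)
      (by simpa only [add_comm] using
        (summable_nat_add_iff J).2 (summable_nat_rpow.2 (by linarith : -a < -1)))
  have hlim : Tendsto (fun N : ℕ => ((J : ℝ) + N) ^ (1 - a)) atTop (nhds 0) := by
    rw [← neg_sub]
    exact (tendsto_rpow_neg_atTop (by linarith)).comp
      (tendsto_atTop_add_const_left _ _ tendsto_natCast_atTop_atTop)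
  simpa using le_of_tendsto (tendsto_const_nhds.sub (hlim.div_const (a - 1)))
    (.of_forall hbound)

lemma tailMass_pos (ha : 1 < a) (hJ : 1 ≤ J) : 0 < tailMass a J :=
  (div_pos (by positivity) (by linarith)).trans_le (le_tailMass ha hJ)

lemma tailMass_le_two_mul (ha : 1 < a) (hJ : 1 ≤ J) (haJ : a - 1 ≤ J) :
    tailMass a J ≤ 2 * ((J : ℝ) ^ (1 - a) / (a - 1)) := by
  have hJ' : (0 : ℝ) < J := by exact_mod_cast hJ
  have hfirst : (J : ℝ) ^ (-a) ≤ (J : ℝ) ^ (1 - a) / (a - 1) := by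
    rw [le_div_iff₀ (by linarith), ← neg_add_eq_sub a 1, rpow_add_one hJ'.ne']
    gcongr
  linarith [tailMass_le ha hJ]

lemma le_tailMass_two_mul (ha : 1 < a) (hJ : 1 ≤ J) {z : ℝ} (hz : (J : ℝ) ^ a ≤ z) :
    J / (2 * a * z ^ 2) ≤ tailMass (2 * a) J := by
  have hJ' : (0 : ℝ) < J := by exact_mod_cast hJ
  have hsplit : (J : ℝ) ^ (1 - 2 * a) = J / ((J : ℝ) ^ a) ^ 2 := by
    rw [rpow_sub hJ', Real.rpow_one, ← Real.rpow_mul_natCast hJ'.le, mul_comm 2 a, Nat.cast_two]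
  calc (J : ℝ) / (2 * a * z ^ 2)
      ≤ J / ((2 * a - 1) * ((J : ℝ) ^ a) ^ 2) := by
        have hcoeff : 0 < 2 * a - 1 := by linarith
        gcongr
        linarith
    _ = (J : ℝ) ^ (1 - 2 * a) / (2 * a - 1) := by rw [hsplit, div_div, mul_comm]
    _ ≤ tailMass (2 * a) J := le_tailMass (by linarith) hJ

end PowerSums

lemma eventually_exists_rpow_mem_Icc {a c d : ℝ} (ha : 0 < a) (hc : 0 < c) (hcd : c < d) (K : ℕ) :
    ∀ᶠ n : ℕ in atTop, ∃ J : ℕ, K ≤ J ∧ (J : ℝ) ^ a ∈ Set.Icc (c * n) (d * n) := by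
  have hd : 0 < d := hc.trans hcd
  have hz : Tendsto (fun n : ℕ => (d * n) ^ a⁻¹) atTop atTop :=
    (tendsto_rpow_atTop (inv_pos.2 ha)).comp (tendsto_natCast_atTop_atTop.const_mul_atTop hd)
  have hratio : (c / d) ^ a⁻¹ < 1 :=
    rpow_lt_one (by positivity) ((div_lt_one hd).2 hcd) (inv_pos.2 ha)
  have hfloor := (tendsto_nat_floor_div_atTop.comp hz).eventually (eventually_ge_nhds hratio)
  filter_upwards [hfloor, hz.eventually_ge_atTop K, eventually_gt_atTop 0] with n hn hK hn0
  have : (0 : ℝ) < n := by exact_mod_cast hn0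
  refine ⟨⌊(d * n) ^ a⁻¹⌋₊, Nat.le_floor hK, ?_, ?_⟩
  · simp only [Function.comp_apply] at hn
    rw [← rpow_inv_le_iff_of_pos (by positivity) (by positivity) ha]
    calc (c * n) ^ a⁻¹ = (c / d) ^ a⁻¹ * (d * n) ^ a⁻¹ := by
          rw [← Real.mul_rpow (by positivity) (by positivity)]
          field_simp
      _ ≤ ⌊(d * n) ^ a⁻¹⌋₊ := (le_div_iff₀ (by positivity)).1 hn
  · rw [← Real.le_rpow_inv_iff_of_pos (by positivity) (by positivity) ha]
    exact Nat.floor_le (by positivity)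

lemma one_div_two_mul_le_Gamma {α : ℝ} (hα : α ∈ Set.Ioo (0 : ℝ) 1) :
    1 / (2 * (1 - α)) ≤ Gamma (1 - α) := by
  obtain ⟨h0, h1⟩ := hα
  have hpos : 0 < Gamma (2 - α) := Gamma_pos_of_pos (by linarith)
  have hconv : Gamma 2 ≤ Gamma (2 - α) ^ (1 / (1 + α)) * Gamma 3 ^ (α / (1 + α)) := by
    convert Gamma_mul_add_mul_le_rpow_Gamma_mul_rpow_Gamma (s := 2 - α) (t := 3)
      (a := 1 / (1 + α)) (b := α / (1 + α)) (by linarith) (by norm_num) (by positivity)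
      (by positivity) (by field_simp) using 2
    field_simp
    ring
  have hscaled : 1 ≤ (Gamma (2 - α) * 2) ^ (1 / (1 + α)) := by
    rw [Real.mul_rpow hpos.le zero_le_two]
    calc 1 ≤ Gamma (2 - α) ^ (1 / (1 + α)) * 2 ^ (α / (1 + α)) := by
          simpa using hconv
      _ ≤ _ := by gcongr; linarith
  have hhalf : 1 ≤ Gamma (2 - α) * 2 := by
    contrapose! hscaled
    exact rpow_lt_one (by positivity) hscaled (by positivity)
  rw [show 2 - α = 1 - α + 1 by ring, Gamma_add_one (by linarith)] at hhalf
  rw [div_le_iff₀ (by linarith)]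
  linarith

section TwoPointBounds

variable {Ω : Type*} [MeasurableSpace Ω] {μ ν : Measure Ω}

/- With `Y = (R - 1) (1_A - 1/2)` one has `E Y = ν A - μ A` and `E Y² = (E R² - 1) / 4`, so the
bound is the nonnegativity of the variance of `Y`. -/
lemma sq_measureReal_sub_le [IsProbabilityMeasure μ] [IsProbabilityMeasure ν] {R : Ω → ℝ}
    (hR0 : ∀ ω, 0 ≤ R ω) (hR : MemLp R 2 μ)
    (hν : ν = μ.withDensity fun ω => ENNReal.ofReal (R ω)) {A : Set Ω} (hA : MeasurableSet A) :
    4 * (μ.real A - ν.real A) ^ 2 ≤ ∫ ω, R ω ^ 2 ∂μ - 1 := by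
  have hRint : Integrable R μ := hR.integrable one_le_two
  have hset {B : Set Ω} (hB : MeasurableSet B) : ∫ ω in B, R ω ∂μ = ν.real B := by
    rw [Measure.real, hν, withDensity_apply _ hB, integral_eq_lintegral_of_nonneg_ae
      (.of_forall hR0) hR.aestronglyMeasurable.restrict]
  have hRone : ∫ ω, R ω ∂μ = 1 := by simpa using hset MeasurableSet.univ
  let Z : Ω → ℝ := fun ω => R ω - 1
  let Y : Ω → ℝ := fun ω => A.indicator Z ω - Z ω / 2
  have hZ : MemLp Z 2 μ := hR.sub (memLp_const 1)
  have hZint : Integrable Z μ := hZ.integrable one_le_two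
  have hY : MemLp Y 2 μ := (hZ.indicator hA).sub (hZ.mul_const 2⁻¹)
  have hmean : ∫ ω, Y ω ∂μ = ν.real A - μ.real A := by
    rw [integral_sub (hZint.indicator hA) (hZint.div_const 2), integral_indicator hA,
      integral_div, integral_sub hRint.restrict (integrable_const 1),
      integral_sub hRint (integrable_const 1), hset hA, hRone]
    simp
  have hsecond : ∫ ω, (Y ^ 2) ω ∂μ = (∫ ω, R ω ^ 2 ∂μ - 1) / 4 := by
    have hYsq (ω : Ω) : (Y ^ 2) ω = (R ω ^ 2 - 2 * R ω + 1) / 4 := by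
      by_cases hω : ω ∈ A <;> simp only [Y, Z, Pi.pow_apply, Set.indicator, hω, if_true, if_false]
        <;> ring
    have hlin : Integrable (fun ω => R ω ^ 2 - 2 * R ω) μ :=
      hR.integrable_sq.sub (hRint.const_mul 2)
    simp only [hYsq]
    rw [integral_div, integral_add hlin (integrable_const 1),
      integral_sub hR.integrable_sq (hRint.const_mul 2), integral_const_mul, hRone,
      integral_const, probReal_univ, one_smul]
    ring
  have hvar := variance_nonneg Y μ
  rw [variance_eq_sub hY, hmean, hsecond] at hvar
  linarith

lemma le_max_measureReal_of_subset_union [IsFiniteMeasure μ] {G A B : Set Ω} {c τ : ℝ}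
    (hG : G ⊆ A ∪ B) (hμ : c + c + τ ≤ μ.real G) (hτ : μ.real B ≤ ν.real B + τ) :
    c ≤ max (μ.real A) (ν.real B) := by
  have hsub : μ.real G ≤ μ.real A + μ.real B :=
    (measureReal_mono hG).trans (measureReal_union_le A B)
  rcases le_total c (μ.real A) with h | h
  · exact le_max_of_le_left h
  · exact le_max_of_le_right (by linarith)

end TwoPointBounds

section DiscreteSamples

lemma exists_pReal_eq {w : ℕ → ℝ} (hw : ∀ j, 0 ≤ w j) (hsum : HasSum w 1) :
    ∃ P : PMF ℕ, pReal P = w := by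
  have hsum' : HasSum (fun j => ENNReal.ofReal (w j)) 1 := by
    rw [ENNReal.summable.hasSum_iff, ← ENNReal.ofReal_tsum_of_nonneg hw hsum.summable,
      hsum.tsum_eq, ofReal_one]
  exact ⟨⟨_, hsum'⟩, funext fun j => toReal_ofReal (hw j)⟩

variable (P Q : PMF ℕ) (n : ℕ)

lemma pReal_nonneg (j : ℕ) : 0 ≤ pReal P j := toReal_nonneg

lemma ofReal_pReal (j : ℕ) : ENNReal.ofReal (pReal P j) = P j := ofReal_toReal (P.apply_ne_top j)

lemma pReal_le_one (j : ℕ) : pReal P j ≤ 1 := toReal_le_of_le_ofReal zero_le_one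
  (by simpa using P.coe_le_one j)

lemma summable_pReal : Summable (pReal P) := summable_toReal P.tsum_coe_ne_top

instance : IsProbabilityMeasure (sampleMeasure P n) := by
  unfold sampleMeasure
  infer_instance

lemma integrable_toMeasure {f : ℕ → ℝ} (hf : Summable fun j => pReal P j * ‖f j‖) :
    Integrable f P.toMeasure := by
  have hsingle (j : ℕ) : P.toMeasure {j} = P j :=
    P.toMeasure_apply_singleton j (measurableSet_singleton j)
  rw [← Measure.sum_smul_dirac P.toMeasure]
  simp only [hsingle]
  exact integrable_sum_dirac P.apply_ne_top hf

lemma sampleMeasure_singleton (ω : Fin n → ℕ) : sampleMeasure P n {ω} = ∏ i, P (ω i) := by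
  simp only [sampleMeasure, Measure.pi_singleton, P.toMeasure_apply_singleton _
    (measurableSet_singleton _)]

variable {P Q}

lemma sampleMeasure_eq_withDensity (hac : ∀ j, pReal P j = 0 → pReal Q j = 0) :
    sampleMeasure Q n = (sampleMeasure P n).withDensity
      fun ω => ENNReal.ofReal (∏ i, pReal Q (ω i) / pReal P (ω i)) := by
  have hratio_nonneg (j : ℕ) : 0 ≤ pReal Q j / pReal P j :=
    div_nonneg (pReal_nonneg Q j) (pReal_nonneg P j)
  have hratio (j : ℕ) : ENNReal.ofReal (pReal Q j / pReal P j) * P j = Q j := by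
    rw [← ofReal_pReal P, ← ofReal_pReal Q, ← ofReal_mul (hratio_nonneg j),
      div_mul_cancel_of_imp (hac j)]
  refine Measure.ext_of_singleton fun ω => ?_
  rw [withDensity_apply _ (measurableSet_singleton _), Measure.restrict_singleton,
    lintegral_smul_measure, lintegral_dirac, sampleMeasure_singleton, sampleMeasure_singleton,
    ofReal_prod_of_nonneg fun i _ => hratio_nonneg _, smul_eq_mul, mul_comm,
    ← Finset.prod_mul_distrib]
  exact Finset.prod_congr rfl fun i _ => (hratio _).symm

lemma sq_sampleMeasure_sub_le (hac : ∀ j, pReal P j = 0 → pReal Q j = 0) {c : ℝ}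
    (hc : HasSum (fun j => pReal Q j ^ 2 / pReal P j) c) (A : Set (Fin n → ℕ)) :
    4 * ((sampleMeasure P n).real A - (sampleMeasure Q n).real A) ^ 2 ≤ c ^ n - 1 := by
  let r : ℕ → ℝ := fun j => pReal Q j / pReal P j
  have hr (j : ℕ) : pReal P j * r j ^ 2 = pReal Q j ^ 2 / pReal P j := by
    simp only [r, div_pow]
    field_simp
  have hint : Integrable (fun j => r j ^ 2) P.toMeasure :=
    integrable_toMeasure P (by simpa only [norm_eq_abs, abs_sq, hr] using hc.summable)
  have hprod (ω : Fin n → ℕ) : (∏ i, r (ω i)) ^ 2 = ∏ i, r (ω i) ^ 2 :=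
    (Finset.prod_pow _ _ _).symm
  have hL2 : MemLp (fun ω : Fin n → ℕ => ∏ i, r (ω i)) 2 (sampleMeasure P n) := by
    rw [memLp_two_iff_integrable_sq Measurable.of_discrete.aestronglyMeasurable]
    simp only [hprod]
    exact Integrable.fintype_prod fun _ => hint
  have hsecond : ∫ ω, (∏ i, r (ω i)) ^ 2 ∂(sampleMeasure P n) = c ^ n := by
    simp only [hprod]
    rw [sampleMeasure, integral_fintype_prod_eq_pow (fun j => r j ^ 2),
      PMF.integral_eq_tsum _ _ hint, ← hc.tsum_eq, Fintype.card_fin]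
    exact congrArg (· ^ n) (tsum_congr hr)
  rw [← hsecond]
  exact sq_measureReal_sub_le
    (fun ω => Finset.prod_nonneg fun i _ => div_nonneg (pReal_nonneg Q _) (pReal_nonneg P _))
    hL2 (sampleMeasure_eq_withDensity n hac) .of_discrete

end DiscreteSamples

section MissingMass

variable {n r : ℕ} {ω : Fin n → ℕ} {p q u v : ℕ → ℝ}

lemma freq_eq_zero_iff {j : ℕ} : freq ω j = 0 ↔ ∀ i, ω i ≠ j := by
  simp [freq, Finset.filter_eq_empty_iff]

lemma missingMass_eq_tsum_indicator (q : ℕ → ℝ) (r : ℕ) (ω : Fin n → ℕ) :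
    missingMass q r ω = ∑' j, {j | freq ω j = 0}.indicator (fun j => q j ^ r) j := by
  simp only [missingMass, mul_ite, mul_one, mul_zero, Set.indicator_apply, Set.mem_ofPred_eq]

lemma missingMass_congr (h : ∀ j, freq ω j = 0 → p j = q j) :
    missingMass p r ω = missingMass q r ω := by
  simp only [missingMass_eq_tsum_indicator]
  exact congrArg tsum (Set.indicator_congr fun j hj => congrArg (· ^ r) (h j hj))

lemma missingMass_nonneg (hq : ∀ j, 0 ≤ q j) (r : ℕ) (ω : Fin n → ℕ) : 0 ≤ missingMass q r ω :=
  tsum_nonneg fun j => mul_nonneg (pow_nonneg (hq j) r) (by split_ifs <;> norm_num)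

lemma missingMass_mono (hp : ∀ j, 0 ≤ p j) (hpq : ∀ j, p j ≤ q j)
    (hq : Summable fun j => q j ^ r) (ω : Fin n → ℕ) : missingMass p r ω ≤ missingMass q r ω := by
  have hpow (j : ℕ) : p j ^ r ≤ q j ^ r := pow_le_pow_left₀ (hp j) (hpq j) r
  have hp' : Summable fun j => p j ^ r := hq.of_nonneg_of_le (fun j => pow_nonneg (hp j) r) hpow
  simp only [missingMass_eq_tsum_indicator]
  exact (hp'.indicator _).tsum_le_tsum (fun j => Set.indicator_le_indicator (hpow j))
    (hq.indicator _)

lemma missingMass_le_tsum (hq : ∀ j, 0 ≤ q j) (hsum : Summable fun j => q j ^ r)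
    (ω : Fin n → ℕ) : missingMass q r ω ≤ ∑' j, q j ^ r := by
  rw [missingMass_eq_tsum_indicator]
  exact (hsum.indicator _).tsum_le_tsum
    (fun j => Set.indicator_le_self' (fun _ _ => pow_nonneg (hq _) r) j) hsum

lemma missingMass_two_le_one (hq : ∀ j, 0 ≤ q j) (hq1 : ∀ j, q j ≤ 1) (hsum : Summable q)
    (ω : Fin n → ℕ) : missingMass q 2 ω ≤ missingMass q 1 ω := by
  have hle (j : ℕ) : q j ^ 2 ≤ q j ^ 1 := pow_le_pow_of_le_one (hq j) (hq1 j) one_le_two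
  have hsum1 : Summable fun j => q j ^ 1 := by simpa only [pow_one] using hsum
  simp only [missingMass_eq_tsum_indicator]
  exact ((hsum1.of_nonneg_of_le (fun j => sq_nonneg (q j)) hle).indicator _).tsum_le_tsum
    (fun j => Set.indicator_le_indicator (hle j)) (hsum1.indicator _)

lemma missingMass_add_const_mul (hr : r ≠ 0) (hdisj : ∀ j, u j = 0 ∨ v j = 0)
    (hu : Summable fun j => u j ^ r) (hv : Summable fun j => v j ^ r) (c : ℝ)
    (ω : Fin n → ℕ) :
    missingMass (fun j => u j + c * v j) r ω =
      missingMass u r ω + c ^ r * missingMass v r ω := by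
  have hpow : (fun j => (u j + c * v j) ^ r) =
      (fun j => u j ^ r) + fun j => c ^ r * v j ^ r := by
    funext j
    rcases hdisj j with h | h <;> simp [h, mul_pow, hr]
  simp only [missingMass_eq_tsum_indicator, hpow]
  simp_rw [Set.indicator_add', Pi.add_apply, Set.indicator_const_mul]
  rw [(hu.indicator _).tsum_add ((hv.indicator _).mul_left _), tsum_mul_left]

variable (P : PMF ℕ) (n)

lemma sampleMeasure_unseen (j : ℕ) :
    (sampleMeasure P n).real {ω | freq ω j = 0} = (1 - pReal P j) ^ n := by
  have hpi : {ω : Fin n → ℕ | freq ω j = 0} = Set.pi Set.univ fun _ => {j}ᶜ := by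
    ext ω
    simp [freq_eq_zero_iff]
  have hcompl : P.toMeasure.real {j}ᶜ = 1 - pReal P j := by
    rw [probReal_compl_eq_one_sub (measurableSet_singleton j), Measure.real,
      P.toMeasure_apply_singleton _ (measurableSet_singleton _), pReal]
  rw [hpi, Measure.real, sampleMeasure, Measure.pi_pi, toReal_prod]
  simp only [← Measure.real_def, hcompl, Finset.prod_const, Finset.card_univ, Fintype.card_fin]

variable {P n}

lemma one_sub_pReal_pow_mem_Icc (P : PMF ℕ) (n j : ℕ) :
    (1 - pReal P j) ^ n ∈ Set.Icc (0 : ℝ) 1 :=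
  ⟨pow_nonneg (by linarith [pReal_le_one P j]) n,
    pow_le_one₀ (by linarith [pReal_le_one P j]) (by linarith [pReal_nonneg P j])⟩

lemma summable_mul_one_sub_pReal_pow (hq : ∀ j, 0 ≤ q j) (hsum : Summable fun j => q j ^ r) :
    Summable fun j => q j ^ r * (1 - pReal P j) ^ n :=
  hsum.of_nonneg_of_le
    (fun j => mul_nonneg (pow_nonneg (hq j) r) (one_sub_pReal_pow_mem_Icc P n j).1)
    fun j => mul_le_of_le_one_right (pow_nonneg (hq j) r) (one_sub_pReal_pow_mem_Icc P n j).2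

lemma integrable_missingMass (hq : ∀ j, 0 ≤ q j) (hsum : Summable fun j => q j ^ r) :
    Integrable (missingMass q r) (sampleMeasure P n) := by
  refine .of_bound Measurable.of_discrete.aestronglyMeasurable (∑' j, q j ^ r) (.of_forall ?_)
  intro ω
  rw [norm_of_nonneg (missingMass_nonneg hq r ω)]
  exact missingMass_le_tsum hq hsum ω

lemma integral_missingMass (hq : ∀ j, 0 ≤ q j) (hsum : Summable fun j => q j ^ r) :
    ∫ ω, missingMass q r ω ∂(sampleMeasure P n) = ∑' j, q j ^ r * (1 - pReal P j) ^ n := by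
  have hterm (j : ℕ) : (fun ω : Fin n → ℕ => q j ^ r * if freq ω j = 0 then 1 else 0) =
      {ω | freq ω j = 0}.indicator fun _ => q j ^ r := by
    funext ω
    simp [Set.indicator_apply]
  have hint (j : ℕ) : ∫ ω, q j ^ r * (if freq ω j = 0 then 1 else 0) ∂(sampleMeasure P n) =
      q j ^ r * (1 - pReal P j) ^ n := by
    rw [hterm, integral_indicator_const _ .of_discrete, sampleMeasure_unseen, smul_eq_mul,
      mul_comm]
  have hnorm (j : ℕ) (ω : Fin n → ℕ) : ‖q j ^ r * (if freq ω j = 0 then 1 else 0)‖ =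
      q j ^ r * if freq ω j = 0 then 1 else 0 :=
    norm_of_nonneg (mul_nonneg (pow_nonneg (hq j) r) (by split_ifs <;> norm_num))
  unfold missingMass
  rw [← integral_tsum_of_summable_integral_norm]
  · exact tsum_congr hint
  · intro j
    rw [hterm]
    exact (integrable_const _).indicator .of_discrete
  · simpa only [hnorm, hint] using summable_mul_one_sub_pReal_pow hq hsum

lemma one_sub_mul_tsum_le_integral_missingMass (hr : r ≠ 0) (hq : ∀ j, 0 ≤ q j)
    (hsum : Summable fun j => q j ^ r) {ε : ℝ} (hε : ∀ j, q j ≠ 0 → n * pReal P j ≤ ε) :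
    (1 - ε) * ∑' j, q j ^ r ≤ ∫ ω, missingMass q r ω ∂(sampleMeasure P n) := by
  rw [integral_missingMass hq hsum, ← tsum_mul_left]
  refine (hsum.mul_left _).tsum_le_tsum (fun j => ?_) (summable_mul_one_sub_pReal_pow hq hsum)
  by_cases hj : q j = 0
  · simp [hj, hr]
  · have hbernoulli := one_add_mul_le_pow (a := -pReal P j) (by linarith [pReal_le_one P j]) n
    rw [mul_comm]
    gcongr
    · exact pow_nonneg (hq j) r
    · rw [sub_eq_add_neg 1 (pReal P j)]
      linarith [hε j hj]

lemma sampleMeasure_unseen_le (hn : 4 ≤ n) {j : ℕ} (hj : 1 / 2 ≤ pReal P j) :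
    (sampleMeasure P n).real {ω | freq ω j = 0} ≤ 1 / 16 := by
  have h0 : 0 ≤ 1 - pReal P j := by linarith [pReal_le_one P j]
  calc (sampleMeasure P n).real {ω | freq ω j = 0}
      = (1 - pReal P j) ^ n := sampleMeasure_unseen n P j
    _ ≤ (1 - pReal P j) ^ 4 := pow_le_pow_of_le_one h0 (by linarith) hn
    _ ≤ (1 / 2) ^ 4 := pow_le_pow_left₀ h0 (by linarith) 4
    _ = 1 / 16 := by norm_num

lemma sampleMeasure_le_missingMass_le (hq : ∀ j, 0 ≤ q j) (hsum : Summable fun j => q j ^ r)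
    {t : ℝ} (ht : 0 < t) :
    (sampleMeasure P n).real {ω | t ≤ missingMass q r ω} ≤
      (∑' j, q j ^ r * (1 - pReal P j) ^ n) / t := by
  rw [le_div_iff₀' ht, ← integral_missingMass hq hsum]
  exact mul_meas_ge_le_integral_of_nonneg (.of_forall fun ω => missingMass_nonneg hq r ω)
    (integrable_missingMass hq hsum) t

lemma sampleMeasure_missingMass_le_half_le (hr : r ≠ 0) (hq : ∀ j, 0 ≤ q j)
    (hsum : Summable fun j => q j ^ r) (hpos : 0 < ∑' j, q j ^ r) {ε : ℝ}
    (hε : ∀ j, q j ≠ 0 → n * pReal P j ≤ ε) :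
    (sampleMeasure P n).real {ω | missingMass q r ω ≤ (∑' j, q j ^ r) / 2} ≤ 2 * ε := by
  set Q := ∑' j, q j ^ r
  have hset : {ω : Fin n → ℕ | missingMass q r ω ≤ Q / 2} =
      {ω | Q / 2 ≤ Q - missingMass q r ω} := by
    ext ω
    simp only [Set.mem_ofPred_eq]
    constructor <;> intro h <;> linarith
  have hmarkov := mul_meas_ge_le_integral_of_nonneg (μ := sampleMeasure P n)
    (.of_forall fun ω => sub_nonneg.2 (missingMass_le_tsum hq hsum ω))
    ((integrable_const Q).sub (integrable_missingMass hq hsum)) (Q / 2)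
  rw [integral_sub (integrable_const Q) (integrable_missingMass hq hsum), integral_const,
    probReal_univ, one_smul, ← hset] at hmarkov
  refine le_of_mul_le_mul_left (hmarkov.trans ?_) (half_pos hpos)
  linarith [one_sub_mul_tsum_le_integral_missingMass hr hq hsum hε]

lemma three_quarters_le_sampleMeasure_missingMass_lt (hn : 4 ≤ n) (h0 : 1 / 2 ≤ pReal P 0)
    (hr : r ≠ 0) (hu : ∀ j, 0 ≤ u j) (husum : Summable fun j => u j ^ r)
    (hv : ∀ j, 0 ≤ v j) (hvsum : Summable fun j => v j ^ r) (hvpos : 0 < ∑' j, v j ^ r)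
    (hrare : ∀ j, v j ≠ 0 → n * pReal P j ≤ 1 / 16)
    (hhead : ∑' j, u j ^ r * (1 - pReal P j) ^ n ≤ (∑' j, v j ^ r) / 96) :
    3 / 4 ≤ (sampleMeasure P n).real
      {ω | freq ω 0 ≠ 0 ∧ 3 * missingMass u r ω < missingMass v r ω} := by
  set Q := ∑' j, v j ^ r
  have hQ6 : 0 < Q / 6 := by positivity
  let E₀ : Set (Fin n → ℕ) := {ω | freq ω 0 = 0}
  let E₁ : Set (Fin n → ℕ) := {ω | missingMass v r ω ≤ Q / 2}
  let E₂ : Set (Fin n → ℕ) := {ω | Q / 6 ≤ missingMass u r ω}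
  have hE₀ : (sampleMeasure P n).real E₀ ≤ 1 / 16 := sampleMeasure_unseen_le hn h0
  have hE₁ : (sampleMeasure P n).real E₁ ≤ 2 * (1 / 16) :=
    sampleMeasure_missingMass_le_half_le hr hv hvsum hvpos hrare
  have hE₂ : (sampleMeasure P n).real E₂ ≤ 1 / 16 := by
    refine (sampleMeasure_le_missingMass_le hu husum hQ6).trans ((div_le_iff₀ hQ6).2 ?_)
    linarith
  have hbad : (sampleMeasure P n).real (E₀ ∪ E₁ ∪ E₂) ≤ 1 / 4 := by
    linarith [measureReal_union_le (μ := sampleMeasure P n) (E₀ ∪ E₁) E₂,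
      measureReal_union_le (μ := sampleMeasure P n) E₀ E₁]
  calc (3 : ℝ) / 4 ≤ (sampleMeasure P n).real (E₀ ∪ E₁ ∪ E₂)ᶜ := by
        rw [probReal_compl_eq_one_sub .of_discrete]
        linarith
    _ ≤ _ := by
        refine measureReal_mono fun ω hω => ?_
        simp only [E₀, E₁, E₂, Set.mem_compl_iff, Set.mem_union, Set.mem_ofPred_eq, not_or,
          not_le] at hω
        exact ⟨hω.1.1, by linarith⟩

end MissingMass

section TwoPointReduction

variable {n : ℕ} {α β C C' L₀ L₁ : ℝ} {est : (Fin n → ℕ) → ℝ} {h : ℝ → ℝ} {P₀ P₁ : PMF ℕ}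

/-- The event that the normalised loss of the estimator `est` of the likelihood ratio exceeds the
level appearing in the lower bound, when the data have law `P` with tail constant `Lα`. -/
def exceedance (α C : ℝ) (est : (Fin n → ℕ) → ℝ) (h : ℝ → ℝ) (P : PMF ℕ) (Lα : ℝ) :
    Set (Fin n → ℕ) :=
  {ω | √((n : ℝ) ^ α * Lα) * mloss h (est ω) (likelihoodRatio (pReal P) ω) >
    √C * min (1 / (8 * √(6 * α))) ((n : ℝ) ^ (α / 2) / 2)}

/-- The largest probability of `exceedance` over the class `Σ(α, β, C, C')`. -/
def worstCaseExceedance (α β C C' : ℝ) (est : (Fin n → ℕ) → ℝ) (h : ℝ → ℝ) : ℝ≥0∞ :=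
  ⨆ (P : PMF ℕ) (Lα : ℝ) (_ : inSigmaClass α β C C' P Lα),
    sampleMeasure P n (exceedance α C est h P Lα)

/-- A relative error which every estimate outside `exceedance` respects as soon as `1 ≤ Lα`. -/
def tolerance (α C : ℝ) (n : ℕ) : ℝ :=
  √C * min (1 / (8 * √(6 * α))) ((n : ℝ) ^ (α / 2) / 2) / √((n : ℝ) ^ α)

lemma tolerance_nonneg (α C : ℝ) (n : ℕ) : 0 ≤ tolerance α C n := by
  unfold tolerance
  positivity

lemma abs_div_sub_one_le_tolerance (hn : 1 ≤ n) {P : PMF ℕ} {L : ℝ} (hL : 1 ≤ L) {ω : Fin n → ℕ}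
    (hT : 0 < likelihoodRatio (pReal P) ω) (hω : ω ∉ exceedance α C est h P L) :
    |est ω / likelihoodRatio (pReal P) ω - 1| ≤ tolerance α C n := by
  have : (0 : ℝ) < n := by exact_mod_cast hn
  have hpow : 0 < (n : ℝ) ^ α := by positivity
  simp only [exceedance, mloss, if_pos hT, Set.mem_ofPred_eq, not_lt, gt_iff_lt] at hω
  rw [tolerance, le_div_iff₀ (sqrt_pos.2 hpow), mul_comm]
  refine le_trans ?_ hω
  gcongr
  exact le_mul_of_one_le_right hpow.le hL

lemma mem_exceedance_union_of_separated (hn : 1 ≤ n) (hL₀ : 1 ≤ L₀) (hL₁ : 1 ≤ L₁) {ε : ℝ}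
    (hε : tolerance α C n ≤ ε) (hε1 : ε ≤ 1) {ω : Fin n → ℕ}
    (hT : 0 < likelihoodRatio (pReal P₁) ω)
    (hsep : (1 + ε) * likelihoodRatio (pReal P₁) ω < (1 - ε) * likelihoodRatio (pReal P₀) ω) :
    ω ∈ exceedance α C est h P₀ L₀ ∪ exceedance α C est h P₁ L₁ := by
  have hε0 : 0 ≤ ε := (tolerance_nonneg α C n).trans hε
  have hT₀ : 0 < likelihoodRatio (pReal P₀) ω :=
    pos_of_mul_pos_right ((by positivity : 0 < (1 + ε) * _).trans hsep) (by linarith)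
  by_contra hω
  rw [Set.mem_union, not_or] at hω
  have h₀ := (abs_le.1 ((abs_div_sub_one_le_tolerance hn hL₀ hT₀ hω.1).trans hε)).1
  have h₁ := (abs_le.1 ((abs_div_sub_one_le_tolerance hn hL₁ hT hω.2).trans hε)).2
  have hlower : (1 - ε) * likelihoodRatio (pReal P₀) ω ≤ est ω := (le_div_iff₀ hT₀).1 (by linarith)
  have hupper : est ω ≤ (1 + ε) * likelihoodRatio (pReal P₁) ω := (div_le_iff₀ hT).1 (by linarith)
  linarith

lemma quarter_le_worstCaseExceedance (h₀ : inSigmaClass α β C C' P₀ L₀)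
    (h₁ : inSigmaClass α β C C' P₁ L₁)
    (hmax : 1 / 4 ≤ max ((sampleMeasure P₀ n).real (exceedance α C est h P₀ L₀))
      ((sampleMeasure P₁ n).real (exceedance α C est h P₁ L₁))) :
    1 / 4 ≤ worstCaseExceedance α β C C' est h := by
  have hreal {P : PMF ℕ} {L : ℝ} (hPL : inSigmaClass α β C C' P L)
      (hle : 1 / 4 ≤ (sampleMeasure P n).real (exceedance α C est h P L)) :
      1 / 4 ≤ worstCaseExceedance α β C C' est h := by
    refine le_iSup₂_of_le P L (le_iSup_of_le hPL ?_)
    rw [← ENNReal.ofReal_le_ofReal_iff measureReal_nonneg, ofReal_measureReal] at hle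
    simpa using hle
  exact (le_max_iff.1 hmax).elim (hreal h₀) (hreal h₁)

lemma tolerance_le_half (hn : 1 ≤ n) (hC : C ≤ 1) : tolerance α C n ≤ 1 / 2 := by
  have hn' : (0 : ℝ) < n := by exact_mod_cast hn
  have hsqrt : √((n : ℝ) ^ α) = (n : ℝ) ^ (α / 2) := by
    rw [sqrt_eq_rpow, ← Real.rpow_mul hn'.le, mul_one_div]
  rw [tolerance, hsqrt, div_le_iff₀ (by positivity)]
  calc √C * min (1 / (8 * √(6 * α))) ((n : ℝ) ^ (α / 2) / 2)
      ≤ 1 * ((n : ℝ) ^ (α / 2) / 2) := by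
        gcongr
        · exact Real.sqrt_le_one.2 hC
        · exact min_le_right _ _
    _ = 1 / 2 * (n : ℝ) ^ (α / 2) := by ring

lemma tolerance_le_sqrt (hα : 0 < α) (C : ℝ) (n : ℕ) :
    tolerance α C n ≤ √(C / (384 * α * (n : ℝ) ^ α)) := by
  have hsqrt : √(384 * α * (n : ℝ) ^ α) = 8 * √(6 * α) * √((n : ℝ) ^ α) := by
    rw [show 384 * α * (n : ℝ) ^ α = 8 ^ 2 * (6 * α) * (n : ℝ) ^ α by ring,
      sqrt_mul (by positivity), sqrt_mul (by positivity), sqrt_sq (by norm_num)]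
  calc tolerance α C n ≤ √C * (1 / (8 * √(6 * α))) / √((n : ℝ) ^ α) := by
        unfold tolerance
        gcongr
        exact min_le_left _ _
    _ = √(C / (384 * α * (n : ℝ) ^ α)) := by
        rw [sqrt_div' _ (by positivity), hsqrt, mul_one_div, div_div]

end TwoPointReduction

section PowerLaw

/-- The sequence `j ↦ j ^ (-a)` restricted to `m ≤ j < J`. -/
def powerBlock (a : ℝ) (m J : ℕ) : ℕ → ℝ := (Set.Ico m J).indicator fun j => (j : ℝ) ^ (-a)

/-- The power law with tail `j ^ (-a)` from `m` on, the weights from `J` on being multiplied by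
`1 + δ`. The symbol `0` receives the remaining mass, so that the total mass is always `1`. -/
def powerLaw (a : ℝ) (m J : ℕ) (δ : ℝ) (j : ℕ) : ℝ :=
  (if j = 0 then 1 - (tailMass a m + δ * tailMass a J) else 0) +
    (powerTail a m j + δ * powerTail a J j)

variable {a δ : ℝ} {m J n j : ℕ}

lemma powerBlock_nonneg (a : ℝ) (m J j : ℕ) : 0 ≤ powerBlock a m J j :=
  Set.indicator_nonneg (fun _ _ => by positivity) j

lemma summable_powerBlock_pow (a : ℝ) (m J : ℕ) {r : ℕ} (hr : r ≠ 0) :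
    Summable fun j => powerBlock a m J j ^ r :=
  summable_of_ne_finset_zero (s := Finset.Ico m J) fun j hj => by
    rw [powerBlock, Set.indicator_of_notMem (by simpa using hj), zero_pow hr]

lemma one_sub_pow_le_factorial_div {x : ℝ} (hx : 0 < x) (hx1 : x ≤ 1) (hn : n ≠ 0) (k : ℕ) :
    (1 - x) ^ n ≤ k.factorial / (n * x) ^ k := by
  have : 0 < (n : ℝ) := by positivity
  calc (1 - x) ^ n ≤ exp (-x) ^ n := pow_le_pow_left₀ (by linarith) (one_sub_le_exp_neg x) n
    _ = (exp (n * x))⁻¹ := by rw [← exp_nat_mul, mul_neg, exp_neg]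
    _ ≤ ((n * x) ^ k / k.factorial)⁻¹ :=
        inv_anti₀ (by positivity) (pow_div_factorial_le_exp _ (by positivity) k)
    _ = k.factorial / (n * x) ^ k := inv_div _ _

lemma rpow_neg_sq_mul_one_sub_pow_le (ha : 0 ≤ a) (hj : 1 ≤ j) (hn : n ≠ 0) (k : ℕ) :
    ((j : ℝ) ^ (-a)) ^ 2 * (1 - (j : ℝ) ^ (-a)) ^ n ≤
      (k + 2).factorial / n ^ (k + 2) * (j : ℝ) ^ (a * k) := by
  have hj' : (1 : ℝ) ≤ j := by exact_mod_cast hj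
  set x := (j : ℝ) ^ (-a) with hx
  have hx0 : 0 < x := by positivity
  have hpow : (j : ℝ) ^ (a * k) = (x ^ k)⁻¹ := by
    rw [hx, rpow_neg (by positivity), Real.rpow_mul_natCast (by positivity), inv_pow, inv_inv]
  calc x ^ 2 * (1 - x) ^ n
      ≤ x ^ 2 * ((k + 2).factorial / (n * x) ^ (k + 2)) := by
        gcongr
        exact one_sub_pow_le_factorial_div hx0
          (rpow_le_one_of_one_le_of_nonpos hj' (by linarith)) hn _
    _ = (k + 2).factorial / n ^ (k + 2) * (j : ℝ) ^ (a * k) := by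
        rw [hpow, mul_pow, pow_add x]
        field_simp

lemma tsum_powerBlock_sq_mul_le (ha : 0 ≤ a) (hm : 1 ≤ m) (hn : n ≠ 0) {p : ℕ → ℝ}
    (hp : ∀ j ∈ Set.Ico m J, p j = (j : ℝ) ^ (-a)) (k : ℕ) :
    ∑' j, powerBlock a m J j ^ 2 * (1 - p j) ^ n ≤
      (k + 2).factorial / n ^ (k + 2) * ((J : ℝ) ^ (a * k + 1) / (a * k + 1)) := by
  have hterm (j : ℕ) : powerBlock a m J j ^ 2 * (1 - p j) ^ n =
      (Finset.Ico m J : Set ℕ).indicator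
        (fun j : ℕ => ((j : ℝ) ^ (-a)) ^ 2 * (1 - (j : ℝ) ^ (-a)) ^ n) j := by
    rw [Finset.coe_Ico]
    by_cases hj : j ∈ Set.Ico m J
    · rw [powerBlock, Set.indicator_of_mem hj, Set.indicator_of_mem hj, hp j hj]
    · rw [powerBlock, Set.indicator_of_notMem hj, Set.indicator_of_notMem hj, zero_pow two_ne_zero,
        zero_mul]
  rw [tsum_congr hterm, ← sum_eq_tsum_indicator]
  calc ∑ j ∈ Finset.Ico m J, ((j : ℝ) ^ (-a)) ^ 2 * (1 - (j : ℝ) ^ (-a)) ^ n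
      ≤ ∑ j ∈ Finset.Ico m J, (k + 2).factorial / n ^ (k + 2) * (j : ℝ) ^ (a * k) :=
        Finset.sum_le_sum fun j hj => rpow_neg_sq_mul_one_sub_pow_le ha
          (hm.trans (Finset.mem_Ico.1 hj).1) hn k
    _ ≤ ∑ j ∈ Finset.range J, (k + 2).factorial / n ^ (k + 2) * (j : ℝ) ^ (a * k) :=
        Finset.sum_le_sum_of_subset_of_nonneg
          (fun j hj => Finset.mem_range.2 (Finset.mem_Ico.1 hj).2) fun _ _ _ => by positivity
    _ ≤ (k + 2).factorial / n ^ (k + 2) * ((J : ℝ) ^ (a * k + 1) / (a * k + 1)) := by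
        rw [← Finset.mul_sum]
        gcongr
        exact sum_range_rpow_le (by positivity) J

lemma powerLaw_zero (hm : 1 ≤ m) (hJ : 1 ≤ J) (a δ : ℝ) :
    powerLaw a m J δ 0 = 1 - (tailMass a m + δ * tailMass a J) := by
  rw [powerLaw, if_pos rfl, powerTail_of_lt hm, powerTail_of_lt hJ, mul_zero, add_zero, add_zero]

lemma powerLaw_of_ne_zero (hj : j ≠ 0) (a δ : ℝ) (m J : ℕ) :
    powerLaw a m J δ j = powerTail a m j + δ * powerTail a J j := by
  rw [powerLaw, if_neg hj, zero_add]

lemma powerLaw_eq_powerBlock_add (hmJ : m ≤ J) (hj : j ≠ 0) (a δ : ℝ) :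
    powerLaw a m J δ j = powerBlock a m J j + (1 + δ) * powerTail a J j := by
  have hsplit : powerTail a m j = powerBlock a m J j + powerTail a J j := by
    rw [powerTail, powerBlock, powerTail, ← Set.Ico_union_Ici_eq_Ici hmJ,
      Set.indicator_union_of_disjoint
        ((Set.Iio_disjoint_Ici le_rfl).mono_left Set.Ico_subset_Iio_self)]
  rw [powerLaw_of_ne_zero hj, hsplit]
  ring

lemma hasSum_powerLaw (ha : 1 < a) (m J : ℕ) (δ : ℝ) : HasSum (powerLaw a m J δ) 1 := by
  have hsum := (hasSum_ite_eq 0 (1 - (tailMass a m + δ * tailMass a J))).add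
    ((summable_powerTail ha m).hasSum.add ((summable_powerTail ha J).hasSum.mul_left δ))
  rwa [← tailMass, ← tailMass, sub_add_cancel] at hsum

lemma powerLaw_nonneg (hδ : 0 ≤ δ) (hmass : tailMass a m + δ * tailMass a J ≤ 1) (j : ℕ) :
    0 ≤ powerLaw a m J δ j := by
  refine add_nonneg ?_ (add_nonneg (powerTail_nonneg a m j)
    (mul_nonneg hδ (powerTail_nonneg a J j)))
  split_ifs
  · linarith
  · exact le_rfl

lemma exists_pReal_eq_powerLaw (ha : 1 < a) (hδ : 0 ≤ δ)
    (hmass : tailMass a m + δ * tailMass a J ≤ 1) : ∃ P : PMF ℕ, pReal P = powerLaw a m J δ :=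
  exists_pReal_eq (powerLaw_nonneg hδ hmass) (hasSum_powerLaw ha m J δ)

lemma powerLaw_sq_div (hm : 1 ≤ m) (hmJ : m ≤ J) (hmass : tailMass a m < 1) (δ : ℝ) (j : ℕ) :
    powerLaw a m J δ j ^ 2 / powerLaw a m J 0 j =
      powerLaw a m J (2 * δ + δ ^ 2) j +
        if j = 0 then δ ^ 2 * tailMass a J * (1 + tailMass a J / (1 - tailMass a m)) else 0 := by
  rcases eq_or_ne j 0 with rfl | hj
  · simp only [powerLaw_zero hm (hm.trans hmJ), if_pos, zero_mul, add_zero]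
    have : 1 - tailMass a m ≠ 0 := by linarith
    field_simp
    ring
  · simp only [powerLaw_of_ne_zero hj, if_neg hj, zero_mul, add_zero]
    rcases le_or_gt m j with hmj | hjm
    · have : powerTail a m j ≠ 0 := by
        rw [powerTail_of_le hmj]
        positivity
      rcases le_or_gt J j with hJj | hjJ
      · rw [powerTail_of_le hJj, ← powerTail_of_le hmj]
        field_simp
        ring
      · rw [powerTail_of_lt hjJ]
        field_simp
        ring
    · simp [powerTail_of_lt hjm, powerTail_of_lt (hjm.trans_le hmJ)]

lemma hasSum_powerLaw_sq_div (ha : 1 < a) (hm : 1 ≤ m) (hmJ : m ≤ J) (hmass : tailMass a m < 1)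
    (δ : ℝ) :
    HasSum (fun j => powerLaw a m J δ j ^ 2 / powerLaw a m J 0 j)
      (1 + δ ^ 2 * tailMass a J * (1 + tailMass a J / (1 - tailMass a m))) := by
  simp only [powerLaw_sq_div hm hmJ hmass]
  exact (hasSum_powerLaw ha m J _).add (hasSum_ite_eq 0 _)

lemma powerLaw_eq_zero (hm : 1 ≤ m) (hmJ : m ≤ J) (hmass : tailMass a m < 1)
    (hj : powerLaw a m J 0 j = 0) (δ : ℝ) : powerLaw a m J δ j = 0 := by
  rcases eq_or_ne j 0 with rfl | hj0
  · rw [powerLaw_zero hm (hm.trans hmJ)] at hj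
    linarith
  · rw [powerLaw_of_ne_zero hj0, zero_mul, add_zero] at hj
    have htail : powerTail a J j = 0 :=
      le_antisymm (hj ▸ powerTail_anti hmJ j) (powerTail_nonneg a J j)
    rw [powerLaw_of_ne_zero hj0, hj, htail, mul_zero, add_zero]

lemma one_add_pow_le_of_mul_le {x y : ℝ} (hx : 0 ≤ x) (hy : y < 1) (hxy : n * x ≤ y) :
    (1 + x) ^ n ≤ 1 / (1 - y) :=
  calc (1 + x) ^ n ≤ exp x ^ n :=
        pow_le_pow_left₀ (by linarith) (by linarith [add_one_le_exp x]) n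
    _ ≤ exp y := by rwa [← exp_nat_mul, exp_le_exp]
    _ ≤ 1 / (1 - y) := by
        rw [le_div_iff₀ (by linarith), ← le_div_iff₀' (exp_pos y), one_div, ← exp_neg]
        exact one_sub_le_exp_neg y

lemma abs_sampleMeasure_powerLaw_sub_le {P₀ P₁ : PMF ℕ} (ha : 1 < a) (hm : 1 ≤ m) (hmJ : m ≤ J)
    (hmass : tailMass a m ≤ 1 / 2) (hP₀ : pReal P₀ = powerLaw a m J 0)
    (hP₁ : pReal P₁ = powerLaw a m J δ) (hδ : n * (2 * δ ^ 2 * tailMass a J) ≤ 3 / 16)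
    (A : Set (Fin n → ℕ)) :
    |(sampleMeasure P₀ n).real A - (sampleMeasure P₁ n).real A| ≤ 1 / 4 := by
  have hmass' : tailMass a m < 1 := by linarith
  have hM := tailMass_nonneg a J
  have hratio : tailMass a J / (1 - tailMass a m) ≤ 1 :=
    (div_le_one (by linarith)).2 (by linarith [tailMass_anti ha hmJ])
  have : 0 ≤ tailMass a J / (1 - tailMass a m) := div_nonneg hM (by linarith)
  have hsq := sq_sampleMeasure_sub_le n (P := P₀) (Q := P₁)
    (fun j hj => by
      rw [hP₁]
      exact powerLaw_eq_zero hm hmJ hmass' (by rwa [← hP₀]) δ)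
    (by simpa only [hP₀, hP₁] using hasSum_powerLaw_sq_div ha hm hmJ hmass' δ) A
  have hpow := one_add_pow_le_of_mul_le (n := n)
    (x := δ ^ 2 * tailMass a J * (1 + tailMass a J / (1 - tailMass a m))) (y := 3 / 16)
    (by positivity) (by norm_num)
    (calc n * (δ ^ 2 * tailMass a J * (1 + tailMass a J / (1 - tailMass a m)))
        ≤ n * (δ ^ 2 * tailMass a J * (1 + 1)) := by gcongr
      _ = n * (2 * δ ^ 2 * tailMass a J) := by ring
      _ ≤ 3 / 16 := hδ)
  rw [abs_sub_comm]
  refine abs_le_of_sq_le_sq ?_ (by norm_num)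
  linarith

lemma mul_div_add_lt_mul_div_add {A₁ A₂ S₁ S₂ : ℝ} (hA₁ : 0 ≤ A₁) (hA₂ : 0 ≤ A₂)
    (hAS : 3 * A₂ < S₂) (hS : S₂ ≤ S₁) (hδ : 0 < δ) (hδ' : δ < 1 / 5) :
    (1 + δ / 5) * ((A₁ + (1 + δ) * S₁) / (A₂ + (1 + δ) ^ 2 * S₂)) <
      (1 - δ / 5) * ((A₁ + S₁) / (A₂ + S₂)) := by
  have hS₂ : 0 < S₂ := by linarith
  have hS₁ : 0 < S₁ := hS₂.trans_le hS
  have hnum : A₁ + (1 + δ) * S₁ ≤ (1 + δ) * (A₁ + S₁) := by nlinarith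
  have hden : (1 + 3 / 2 * δ) * (A₂ + S₂) ≤ A₂ + (1 + δ) ^ 2 * S₂ := by
    nlinarith [mul_nonneg (mul_nonneg hδ.le hδ.le) hS₂.le]
  have hconst : (1 + δ / 5) * (1 + δ) < (1 - δ / 5) * (1 + 3 / 2 * δ) := by nlinarith
  rw [mul_div_assoc', mul_div_assoc', div_lt_div_iff₀ (by positivity) (by positivity)]
  have hδ5 : 0 < 1 - δ / 5 := by linarith
  calc (1 + δ / 5) * (A₁ + (1 + δ) * S₁) * (A₂ + S₂)
      ≤ (1 + δ / 5) * ((1 + δ) * (A₁ + S₁)) * (A₂ + S₂) := by gcongr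
    _ = (1 + δ / 5) * (1 + δ) * ((A₁ + S₁) * (A₂ + S₂)) := by ring
    _ < (1 - δ / 5) * (1 + 3 / 2 * δ) * ((A₁ + S₁) * (A₂ + S₂)) := by gcongr
    _ = (1 - δ / 5) * (A₁ + S₁) * ((1 + 3 / 2 * δ) * (A₂ + S₂)) := by ring
    _ ≤ (1 - δ / 5) * (A₁ + S₁) * (A₂ + (1 + δ) ^ 2 * S₂) := by gcongr

end PowerLaw

section TailFunction

variable {α β C C' L x z δ K : ℝ} {m J j : ℕ} {P : PMF ℕ}

lemma finite_setOf_lt_pReal (P : PMF ℕ) (hx : 0 < x) : {j | x < pReal P j}.Finite := by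
  have hsmall : ∀ᶠ j in cofinite, pReal P j ≤ x :=
    (summable_pReal P).tendsto_cofinite_zero.eventually_le_const hx
  simpa only [eventually_cofinite, not_le] using hsmall

lemma tailF_le (hz : 0 ≤ z) (h : ∀ j, x < pReal P j → (j : ℝ) < z) : (tailF P x : ℝ) ≤ z + 1 := by
  have hsub : {j | x < pReal P j} ⊆ (Finset.range ⌈z⌉₊ : Set ℕ) := fun j hj => by
    simpa [Nat.lt_ceil] using h j hj
  have hcard := Set.ncard_le_ncard hsub (Finset.finite_toSet _)
  rw [Set.ncard_coe_finset, Finset.card_range] at hcard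
  calc (tailF P x : ℝ) ≤ ⌈z⌉₊ := by exact_mod_cast hcard
    _ ≤ z + 1 := (Nat.ceil_lt_add_one hz).le

lemma sub_le_tailF (hx : 0 < x) (h : ∀ j, m ≤ j → (j : ℝ) < z → x < pReal P j) :
    z - m ≤ tailF P x := by
  have hsub : (Finset.Ico m ⌈z⌉₊ : Set ℕ) ⊆ {j | x < pReal P j} := fun j hj => by
    rw [Finset.coe_Ico] at hj
    exact h j hj.1 (Nat.lt_ceil.1 hj.2)
  have hcard := Set.ncard_le_ncard hsub (finite_setOf_lt_pReal P hx)
  rw [Set.ncard_coe_finset, Nat.card_Ico, Nat.sub_le_iff_le_add] at hcard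
  have hceil : (⌈z⌉₊ : ℝ) ≤ tailF P x + m := by exact_mod_cast hcard
  linarith [Nat.le_ceil z]

lemma inSigmaClass_of_abs_le (hβ : 0 < β) (hL : 0 < L) (hCL : C ≤ L)
    (h : ∀ x ∈ Set.Ioo (0 : ℝ) 1, x ^ (-β) * |(tailF P x : ℝ) / (L * x ^ (-α)) - 1| ≤ C') :
    inSigmaClass α β C C' P L := by
  refine ⟨?_, hCL, h⟩
  have hβlim : Tendsto (fun x : ℝ => C' * x ^ β) (nhdsWithin 0 (Set.Ioi 0)) (nhds 0) := by
    have hcont := (Real.continuousAt_rpow_const 0 β (Or.inr hβ.le)).tendsto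
    rw [Real.zero_rpow hβ.ne'] at hcont
    simpa using (hcont.mono_left nhdsWithin_le_nhds).const_mul C'
  have hratio : Tendsto (fun x : ℝ => (tailF P x : ℝ) / (L * x ^ (-α)) - 1)
      (nhdsWithin 0 (Set.Ioi 0)) (nhds 0) := by
    refine squeeze_zero_norm' ?_ hβlim
    filter_upwards [Ioo_mem_nhdsGT (zero_lt_one' ℝ)] with x hx
    have hbound := h x hx
    rwa [rpow_neg hx.1.le, inv_mul_le_iff₀ (rpow_pos_of_pos hx.1 β), mul_comm _ C'] at hbound
  have hlim := (hratio.add_const 1).const_mul L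
  rw [zero_add, mul_one] at hlim
  refine hlim.congr' (eventually_nhdsWithin_of_forall fun x (hx : 0 < x) => ?_)
  rw [rpow_neg hx.le]
  field_simp
  ring

lemma lt_mul_rpow_neg_iff (hα : 0 < α) (hj : 1 ≤ j) (hx : 0 < x) {c : ℝ} (hc : 0 < c) :
    x < c * (j : ℝ) ^ (-(1 / α)) ↔ (j : ℝ) < c ^ α * x ^ (-α) := by
  have hj' : (0 : ℝ) < j := by exact_mod_cast hj
  rw [← Real.rpow_lt_rpow_iff hx.le (by positivity) hα, Real.mul_rpow hc.le (by positivity),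
    ← Real.rpow_mul hj'.le, neg_mul, one_div_mul_cancel hα.ne', Real.rpow_neg_one, rpow_neg hx.le,
    ← div_eq_mul_inv, ← div_eq_mul_inv, lt_div_iff₀ hj', lt_div_iff₀ (by positivity), mul_comm]

lemma tailF_powerLaw_le (hα : 0 < α) (hδ : 0 ≤ δ) (hP : pReal P = powerLaw (1 / α) m J δ)
    (hx : 0 < x) : (tailF P x : ℝ) ≤ (1 + δ) ^ α * x ^ (-α) + 1 := by
  refine tailF_le (by positivity) fun j hj => ?_
  rcases eq_or_ne j 0 with rfl | hj0
  · rw [Nat.cast_zero]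
    positivity
  · refine (lt_mul_rpow_neg_iff hα (Nat.one_le_iff_ne_zero.2 hj0) hx (by linarith)).1 ?_
    rw [hP, powerLaw_of_ne_zero hj0] at hj
    calc x < powerTail (1 / α) m j + δ * powerTail (1 / α) J j := hj
      _ ≤ (j : ℝ) ^ (-(1 / α)) + δ * (j : ℝ) ^ (-(1 / α)) := by gcongr <;> exact powerTail_le _ _ j
      _ = (1 + δ) * (j : ℝ) ^ (-(1 / α)) := by ring

lemma sub_le_tailF_powerLaw (hα : 0 < α) (hδ : 0 ≤ δ) (hm : 1 ≤ m)
    (hP : pReal P = powerLaw (1 / α) m J δ) (hx : 0 < x) : x ^ (-α) - m ≤ tailF P x := by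
  refine sub_le_tailF hx fun j hmj hj => ?_
  rw [hP, powerLaw_of_ne_zero (by lia), powerTail_of_le hmj]
  calc x < 1 * (j : ℝ) ^ (-(1 / α)) :=
        (lt_mul_rpow_neg_iff hα (hm.trans hmj) hx one_pos).2 (by rwa [Real.one_rpow, one_mul])
    _ ≤ (j : ℝ) ^ (-(1 / α)) + δ * powerTail (1 / α) J j := by
        rw [one_mul]
        exact le_add_of_nonneg_right (mul_nonneg hδ (powerTail_nonneg _ J j))

lemma mul_sub_le_tailF_powerLaw (hα : 0 < α) (hδ : 0 ≤ δ) (hm : 1 ≤ m)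
    (hP : pReal P = powerLaw (1 / α) m J δ) (hx : 0 < x) (hJ : J ≤ x ^ (-α)) :
    (1 + δ) ^ α * x ^ (-α) - m ≤ tailF P x := by
  refine sub_le_tailF hx fun j hmj hj => ?_
  rw [hP, powerLaw_of_ne_zero (by lia), powerTail_of_le hmj]
  rcases le_or_gt J j with hJj | hjJ
  · rw [powerTail_of_le hJj, ← one_add_mul]
    exact (lt_mul_rpow_neg_iff hα (hm.trans hmj) hx (by linarith)).2 hj
  · rw [powerTail_of_lt hjJ, mul_zero, add_zero, ← one_mul ((j : ℝ) ^ _)]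
    refine (lt_mul_rpow_neg_iff hα (hm.trans hmj) hx one_pos).2 ?_
    rw [Real.one_rpow, one_mul]
    exact hJ.trans_lt' (by exact_mod_cast hjJ)

lemma abs_tailF_powerLaw_sub_le (hα : α ∈ Set.Ioo (0 : ℝ) 1) (hδ : 0 ≤ δ) (hm : 1 ≤ m)
    (hK : δ * √J ≤ K) (hP : pReal P = powerLaw (1 / α) m J δ) (hx : 0 < x) :
    |(tailF P x : ℝ) - (1 + δ) ^ α * x ^ (-α)| ≤ m + 1 + K * √(x ^ (-α)) := by
  have hupper := tailF_powerLaw_le hα.1 hδ hP hx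
  have hK0 : 0 ≤ K := le_trans (by positivity) hK
  set y := x ^ (-α)
  have hy : 0 < y := by positivity
  have hKy : 0 ≤ K * √y := by positivity
  have : (0 : ℝ) ≤ m := by positivity
  suffices hlower : (1 + δ) ^ α * y - (m + K * √y) ≤ tailF P x by
    rw [abs_le]
    constructor <;> linarith
  rcases le_or_gt (J : ℝ) y with hJy | hyJ
  · linarith [mul_sub_le_tailF_powerLaw hα.1 hδ hm hP hx hJy]
  · have hδy : δ * y ≤ K * √y := by
      calc δ * y = δ * √y * √y := by rw [mul_assoc, mul_self_sqrt hy.le]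
        _ ≤ δ * √J * √y := by gcongr
        _ ≤ K * √y := by gcongr
    have hL : (1 + δ) ^ α ≤ 1 + δ := by
      simpa using rpow_le_rpow_of_exponent_le (by linarith : 1 ≤ 1 + δ) hα.2.le
    calc (1 + δ) ^ α * y - (m + K * √y) ≤ (1 + δ) * y - (m + δ * y) := by gcongr
      _ = y - m := by ring
      _ ≤ tailF P x := sub_le_tailF_powerLaw hα.1 hδ hm hP hx

lemma inSigmaClass_powerLaw (hα : α ∈ Set.Ioo (0 : ℝ) 1) (hβ : 0 < β) (hβα : β ≤ α / 2)
    (hC : C ≤ 1) (hδ : 0 ≤ δ) (hm : 1 ≤ m) (hK : δ * √J ≤ K) (hC' : m + 1 + K ≤ C')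
    (hP : pReal P = powerLaw (1 / α) m J δ) : inSigmaClass α β C C' P ((1 + δ) ^ α) := by
  have hL : 1 ≤ (1 + δ) ^ α := one_le_rpow (by linarith) hα.1.le
  have hK0 : 0 ≤ K := le_trans (by positivity) hK
  refine inSigmaClass_of_abs_le hβ (by positivity) (hC.trans hL) fun x ⟨hx0, hx1⟩ => ?_
  have habs := abs_tailF_powerLaw_sub_le hα hδ hm hK hP hx0
  set y := x ^ (-α) with hy
  have hy1 : 1 ≤ y := one_le_rpow_of_pos_of_le_one_of_nonpos hx0 hx1.le (by linarith [hα.1])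
  have hsqrt : √y ≤ y := (sqrt_le_left (by positivity)).2 (le_self_pow₀ hy1 two_ne_zero)
  have hpow : x ^ (-β) ≤ √y := by
    rw [sqrt_eq_rpow, hy, ← Real.rpow_mul hx0.le]
    exact rpow_le_rpow_of_exponent_ge hx0 hx1.le (by linarith)
  have hLy : 0 < (1 + δ) ^ α * y := by positivity
  have hC'0 : 0 ≤ C' := le_trans (by positivity) hC'
  rw [div_sub_one hLy.ne', abs_div, abs_of_pos hLy, ← mul_div_assoc, div_le_iff₀ hLy]
  calc x ^ (-β) * |(tailF P x : ℝ) - (1 + δ) ^ α * y|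
      ≤ √y * (m + 1 + K * √y) := by gcongr
    _ = (m + 1) * √y + K * y := by linear_combination K * mul_self_sqrt (by positivity : 0 ≤ y)
    _ ≤ (m + 1) * y + K * y := by gcongr
    _ = (m + 1 + K) * (1 * y) := by ring
    _ ≤ C' * ((1 + δ) ^ α * y) := by gcongr

end TailFunction

section SmallSamples

variable {α β C C' a : ℝ} {n m J : ℕ} {P : PMF ℕ}

lemma one_sub_mul_le_sampleMeasure_const (P : PMF ℕ) (n j : ℕ) :
    1 - n * (1 - pReal P j) ≤ (sampleMeasure P n).real {fun _ => j} := by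
  have hbernoulli := one_add_mul_le_pow
    (by linarith [pReal_nonneg P j] : (-2 : ℝ) ≤ pReal P j - 1) n
  have hprod : (sampleMeasure P n).real {fun _ => j} = pReal P j ^ n := by
    rw [Measure.real, sampleMeasure_singleton, Finset.prod_const, Finset.card_univ,
      Fintype.card_fin, ENNReal.toReal_pow, pReal]
  rw [add_sub_cancel] at hbernoulli
  linarith

lemma missingMass_powerLaw_const_zero (hn : 1 ≤ n) (hm : 1 ≤ m) (a : ℝ) (J : ℕ) {r : ℕ}
    (hr : r ≠ 0) :
    missingMass (powerLaw a m J 0) r (fun _ : Fin n => 0) = ∑' j, powerTail a m j ^ r := by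
  have : NeZero n := ⟨by lia⟩
  have hunseen (j : ℕ) : freq (fun _ : Fin n => 0) j = 0 ↔ j ≠ 0 := by
    rw [freq_eq_zero_iff, forall_const, ne_comm]
  refine tsum_congr fun j => ?_
  rcases eq_or_ne j 0 with rfl | hj
  · rw [if_neg (by simp [hunseen]), powerTail_of_lt hm, mul_zero, zero_pow hr]
  · rw [if_pos ((hunseen j).2 hj), powerLaw_of_ne_zero hj, zero_mul, add_zero, mul_one]

lemma likelihoodRatio_powerLaw_const_zero (hn : 1 ≤ n) (hm : 1 ≤ m) (a : ℝ) (J : ℕ) :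
    likelihoodRatio (powerLaw a m J 0) (fun _ : Fin n => 0) =
      tailMass a m / tailMass (2 * a) m := by
  rw [likelihoodRatio, missingMass_powerLaw_const_zero hn hm a J one_ne_zero,
    missingMass_powerLaw_const_zero hn hm a J two_ne_zero]
  simp only [pow_one, powerTail_sq, tailMass]

lemma rpow_le_tailMass_div_tailMass (ha : 1 < a) (hm : 1 ≤ m) :
    (m : ℝ) ^ a ≤ tailMass a m / tailMass (2 * a) m := by
  have : (0 : ℝ) < m := by exact_mod_cast hm
  have hterm (j : ℕ) : (m : ℝ) ^ a * powerTail (2 * a) m j ≤ powerTail a m j := by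
    rcases le_or_gt m j with hmj | hjm
    · have hj' : (0 : ℝ) < j := by exact_mod_cast hm.trans hmj
      rw [← powerTail_sq, powerTail_of_le hmj, rpow_neg hj'.le, sq, ← mul_assoc]
      refine mul_le_of_le_one_left (by positivity) ?_
      rw [← div_eq_mul_inv, div_le_one (by positivity)]
      gcongr
    · rw [powerTail_of_lt hjm, powerTail_of_lt hjm, mul_zero]
  rw [le_div_iff₀ (tailMass_pos (by linarith) hm), tailMass, tailMass, ← tsum_mul_left]
  exact ((summable_powerTail (by linarith) m).mul_left _).tsum_le_tsum hterm
    (summable_powerTail ha m)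

lemma exists_inSigmaClass_const_zero (hα : α ∈ Set.Ioo (0 : ℝ) 1) (hβ : 0 < β) (hβα : β ≤ α / 2)
    (hC : C ≤ 1) (hn : 1 ≤ n) (hm : 1 ≤ m) (hmass : n * tailMass (1 / α) m ≤ 3 / 4)
    (hC' : m + 1 ≤ C') :
    ∃ P, inSigmaClass α β C C' P 1 ∧ 1 / 4 ≤ (sampleMeasure P n).real {fun _ => 0} ∧
      likelihoodRatio (pReal P) (fun _ : Fin n => 0) =
        tailMass (1 / α) m / tailMass (2 * (1 / α)) m := by
  have ha : 1 < 1 / α := one_lt_one_div hα.1 hα.2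
  have hle : tailMass (1 / α) m ≤ n * tailMass (1 / α) m :=
    le_mul_of_one_le_left (tailMass_nonneg _ m) (by exact_mod_cast hn)
  obtain ⟨P, hP⟩ := exists_pReal_eq_powerLaw ha (m := m) (J := m) le_rfl (by linarith)
  have hP0 : pReal P 0 = 1 - tailMass (1 / α) m := by
    rw [hP, powerLaw_zero hm hm, zero_mul, add_zero]
  refine ⟨P, ?_, ?_, ?_⟩
  · simpa using inSigmaClass_powerLaw hα hβ hβα hC le_rfl hm (K := 0) (by simp) (by simpa) hP
  · refine le_trans ?_ (one_sub_mul_le_sampleMeasure_const P n 0)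
    rw [hP0]
    linarith
  · rw [hP, likelihoodRatio_powerLaw_const_zero hn hm]

lemma exists_quarter_le_worstCaseExceedance_of_le (hα : α ∈ Set.Ioo (0 : ℝ) 1) (hβ : 0 < β)
    (hβα : β ≤ α / 2) (N : ℕ) :
    ∃ Cab : ℝ, ∀ n : ℕ, 1 ≤ n → n ≤ N → ∀ C ≤ 1, ∀ C' ≥ Cab, ∀ (est : (Fin n → ℕ) → ℝ)
      (h : ℝ → ℝ), 1 / 4 ≤ worstCaseExceedance α β C C' est h := by
  have ha : 1 < 1 / α := one_lt_one_div hα.1 hα.2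
  have hmass : ∀ᶠ m in atTop, 1 ≤ m ∧ N * tailMass (1 / α) m ≤ 3 / 4 := by
    have hlim := (tendsto_tailMass ha).const_mul (N : ℝ)
    rw [mul_zero] at hlim
    exact (eventually_ge_atTop 1).and (hlim.eventually_le_const (by norm_num))
  obtain ⟨m₁, hm₁, hmass₁⟩ := hmass.exists
  set T₁ := tailMass (1 / α) m₁ / tailMass (2 * (1 / α)) m₁
  have hgrow : Tendsto (fun m : ℕ => (m : ℝ) ^ (1 / α)) atTop atTop :=
    (tendsto_rpow_atTop (by linarith)).comp tendsto_natCast_atTop_atTop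
  obtain ⟨m₀, ⟨hm₀, hmass₀⟩, hgap⟩ := (hmass.and (hgrow.eventually_gt_atTop (3 * T₁))).exists
  refine ⟨max (m₀ + 1) (m₁ + 1), fun n hn hnN C hC C' hC' est h => ?_⟩
  have hscale {m : ℕ} (hN : N * tailMass (1 / α) m ≤ 3 / 4) : n * tailMass (1 / α) m ≤ 3 / 4 :=
    hN.trans' (mul_le_mul_of_nonneg_right (by exact_mod_cast hnN) (tailMass_nonneg _ m))
  obtain ⟨P₀, hclass₀, hprob₀, hratio₀⟩ := exists_inSigmaClass_const_zero hα hβ hβα hC hn hm₀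
    (hscale hmass₀) ((le_max_left _ _).trans hC')
  obtain ⟨P₁, hclass₁, hprob₁, hratio₁⟩ := exists_inSigmaClass_const_zero hα hβ hβα hC hn hm₁
    (hscale hmass₁) ((le_max_right _ _).trans hC')
  have hT₁pos : 0 < T₁ := div_pos (tailMass_pos ha hm₁) (tailMass_pos (by linarith) hm₁)
  have hmem := mem_exceedance_union_of_separated (est := est) (h := h) hn le_rfl le_rfl
    (tolerance_le_half (α := α) hn hC) (by norm_num) (by rwa [hratio₁]) (by
      rw [hratio₀, hratio₁]
      linarith [rpow_le_tailMass_div_tailMass ha hm₀])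
  have hmono {P : PMF ℕ} (hP : 1 / 4 ≤ (sampleMeasure P n).real {fun _ => 0})
      (hP' : (fun _ => 0) ∈ exceedance α C est h P 1) :
      1 / 4 ≤ (sampleMeasure P n).real (exceedance α C est h P 1) :=
    hP.trans (measureReal_mono (Set.singleton_subset_iff.2 hP'))
  exact quarter_le_worstCaseExceedance hclass₀ hclass₁
    (le_max_iff.2 (hmem.imp (hmono hprob₀) (hmono hprob₁)))

end SmallSamples

section LargeSamples

variable {α β C C' K a δ : ℝ} {n m J J' : ℕ} {P P₀ P₁ : PMF ℕ} {ω : Fin n → ℕ}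

lemma missingMass_powerLaw (ha : 1 < a) (hmJ : m ≤ J) (hω : freq ω 0 ≠ 0) (δ : ℝ) {r : ℕ}
    (hr : r ≠ 0) :
    missingMass (powerLaw a m J δ) r ω = missingMass (powerBlock a m J) r ω +
      (1 + δ) ^ r * missingMass (powerTail a J) r ω := by
  rw [missingMass_congr fun j hj => powerLaw_eq_powerBlock_add hmJ
    (by rintro rfl; exact hω hj) a δ, missingMass_add_const_mul hr (fun j => ?_)
    (summable_powerBlock_pow a m J hr) (summable_powerTail_pow ha J hr)]
  rcases le_or_gt J j with hJj | hjJ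
  · exact Or.inl (Set.indicator_of_notMem (fun hj => hj.2.not_ge hJj) _)
  · exact Or.inr (powerTail_of_lt hjJ)

lemma likelihoodRatio_powerLaw_separated (ha : 1 < a) (hm : 1 ≤ m) (hmJ : m ≤ J) (hJJ' : J ≤ J')
    (hδ : 0 < δ) (hδ5 : δ < 1 / 5) (hω : freq ω 0 ≠ 0)
    (hrare : 3 * missingMass (powerBlock a m J) 2 ω < missingMass (powerTail a J') 2 ω) :
    0 < likelihoodRatio (powerLaw a m J δ) ω ∧
      (1 + δ / 5) * likelihoodRatio (powerLaw a m J δ) ω <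
        (1 - δ / 5) * likelihoodRatio (powerLaw a m J 0) ω := by
  have hA₁ := missingMass_nonneg (powerBlock_nonneg a m J) 1 ω
  have hA₂ := missingMass_nonneg (powerBlock_nonneg a m J) 2 ω
  have hAS : 3 * missingMass (powerBlock a m J) 2 ω < missingMass (powerTail a J) 2 ω :=
    hrare.trans_le (missingMass_mono (powerTail_nonneg a J') (powerTail_anti hJJ')
      (summable_powerTail_pow ha J two_ne_zero) ω)
  have hS : missingMass (powerTail a J) 2 ω ≤ missingMass (powerTail a J) 1 ω :=
    missingMass_two_le_one (powerTail_nonneg a J)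
      (powerTail_le_one (by linarith) (hm.trans hmJ)) (summable_powerTail ha J) ω
  simp only [likelihoodRatio, missingMass_powerLaw ha hmJ hω _ one_ne_zero,
    missingMass_powerLaw ha hmJ hω _ two_ne_zero, add_zero, one_pow, one_mul, pow_one]
  refine ⟨?_, mul_div_add_lt_mul_div_add hA₁ hA₂ hAS hS hδ hδ5⟩
  have hS₂ : 0 < missingMass (powerTail a J) 2 ω := by linarith
  have : 0 < missingMass (powerTail a J) 1 ω := by linarith
  positivity

/- The exponent `8` in the bound `(1 - x) ^ n ≤ (8 + 2)! / (n * x) ^ (8 + 2)` yields a gain of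
`32 ^ 8` from the cutoff, which absorbs the factorial. -/
lemma tsum_powerBlock_sq_mul_le_tailMass_div (ha : 1 < a) (hm : 1 ≤ m) (hn : 1 ≤ n) (hJ : 1 ≤ J)
    (hJJ' : J ≤ J') (hJn : (J : ℝ) ^ a ≤ 1 / 32 * n) (hJ'n : (J' : ℝ) ^ a ≤ 32 * n) {p : ℕ → ℝ}
    (hp : ∀ j ∈ Set.Ico m J, p j = (j : ℝ) ^ (-a)) :
    ∑' j, powerBlock a m J j ^ 2 * (1 - p j) ^ n ≤ tailMass (2 * a) J' / 96 := by
  have hJ0 : (0 : ℝ) < J := by exact_mod_cast hJ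
  have : (0 : ℝ) < n := by exact_mod_cast hn
  have hJJ'r : (J : ℝ) ≤ J' := by exact_mod_cast hJJ'
  have hpow : (J : ℝ) ^ (a * (8 : ℕ) + 1) ≤ (1 / 32 * n) ^ 8 * J := by
    rw [rpow_add_one hJ0.ne', Real.rpow_mul_natCast hJ0.le]
    gcongr
  calc ∑' j, powerBlock a m J j ^ 2 * (1 - p j) ^ n
      ≤ (8 + 2).factorial / n ^ (8 + 2) * ((J : ℝ) ^ (a * (8 : ℕ) + 1) / (a * (8 : ℕ) + 1)) :=
        tsum_powerBlock_sq_mul_le (by linarith) hm (by lia) hp 8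
    _ ≤ (8 + 2).factorial / n ^ (8 + 2) * ((1 / 32 * n) ^ 8 * J' / (a * 8)) := by
        refine mul_le_mul_of_nonneg_left (div_le_div₀ (by positivity) (hpow.trans (by gcongr))
          (by positivity) ?_) (by positivity)
        push_cast
        linarith
    _ = (8 + 2).factorial / 32 ^ 8 / 8 * (J' / (a * n ^ 2)) := by field_simp
    _ ≤ 1 / (2 * 32 ^ 2) / 96 * (J' / (a * n ^ 2)) := by
        refine mul_le_mul_of_nonneg_right ?_ (by positivity)
        norm_num [Nat.factorial]
    _ = J' / (2 * a * (32 * n) ^ 2) / 96 := by field_simp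
    _ ≤ tailMass (2 * a) J' / 96 := by
        gcongr
        exact le_tailMass_two_mul ha (hJ.trans hJJ') hJ'n

lemma three_quarters_le_sampleMeasure_powerLaw (ha : 1 < a) (hn : 4 ≤ n) (hm : 1 ≤ m)
    (hmJ : m ≤ J) (hJJ' : J ≤ J') (hmass : tailMass a m ≤ 1 / 2)
    (hJn : (J : ℝ) ^ a ≤ 1 / 32 * n) (hJ'n : (J' : ℝ) ^ a ∈ Set.Icc (16 * (n : ℝ)) (32 * n))
    (hP : pReal P = powerLaw a m J 0) :
    3 / 4 ≤ (sampleMeasure P n).real {ω | freq ω 0 ≠ 0 ∧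
      3 * missingMass (powerBlock a m J) 2 ω < missingMass (powerTail a J') 2 ω} := by
  have hJ : 1 ≤ J := hm.trans hmJ
  have hlaw {j : ℕ} (hj : m ≤ j) : pReal P j = (j : ℝ) ^ (-a) := by
    rw [hP, powerLaw_of_ne_zero (by lia), zero_mul, add_zero, powerTail_of_le hj]
  have hsq : ∑' j, powerTail a J' j ^ 2 = tailMass (2 * a) J' := by
    simp only [powerTail_sq, tailMass]
  refine three_quarters_le_sampleMeasure_missingMass_lt hn ?_ two_ne_zero (powerBlock_nonneg a m J)
    (summable_powerBlock_pow a m J two_ne_zero) (powerTail_nonneg a J')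
    (summable_powerTail_pow ha J' two_ne_zero) ?_ (fun j hj => ?_) ?_
  · rw [hP, powerLaw_zero hm hJ]
    linarith
  · rw [hsq]
    exact tailMass_pos (by linarith) (hJ.trans hJJ')
  · have hJ'j : J' ≤ j := le_of_not_gt fun h => hj (powerTail_of_lt h)
    have hj0 : (0 : ℝ) < j := by exact_mod_cast hJ.trans (hJJ'.trans hJ'j)
    have hja : 16 * (n : ℝ) ≤ (j : ℝ) ^ a := hJ'n.1.trans (by gcongr)
    rw [hlaw (hmJ.trans (hJJ'.trans hJ'j)), rpow_neg hj0.le, ← div_eq_mul_inv,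
      div_le_iff₀ (by positivity)]
    linarith
  · rw [hsq]
    exact tsum_powerBlock_sq_mul_le_tailMass_div ha hm (by lia) hJ hJJ' hJn hJ'n.2
      fun j hj => hlaw hj.1

lemma quarter_le_worstCaseExceedance_of_cutoffs (hα : α ∈ Set.Ioo (0 : ℝ) 1) (hβ : 0 < β)
    (hβα : β ≤ α / 2) (hC : C ≤ 1) (hn : 4 ≤ n) (hm : 1 ≤ m)
    (hmass : tailMass (1 / α) m ≤ 1 / 2) (hmJ : m ≤ J) (hJn : (J : ℝ) ^ (1 / α) ≤ 1 / 32 * n)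
    (hJ'n : (J' : ℝ) ^ (1 / α) ∈ Set.Icc (16 * (n : ℝ)) (32 * n)) (hδ : 0 < δ) (hδ5 : δ < 1 / 5)
    (hχ : n * (2 * δ ^ 2 * tailMass (1 / α) J) ≤ 3 / 16) (hK : δ * √J ≤ K) (hC' : m + 1 + K ≤ C')
    (htol : tolerance α C n ≤ δ / 5) (est : (Fin n → ℕ) → ℝ) (h : ℝ → ℝ) :
    1 / 4 ≤ worstCaseExceedance α β C C' est h := by
  have ha : 1 < 1 / α := one_lt_one_div hα.1 hα.2
  have hJJ' : J ≤ J' := by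
    have hle : (J : ℝ) ^ (1 / α) ≤ (J' : ℝ) ^ (1 / α) := by
      linarith [hJ'n.1, (Nat.cast_nonneg n : (0 : ℝ) ≤ n)]
    exact_mod_cast (rpow_le_rpow_iff (by positivity) (by positivity) (by linarith)).1 hle
  have hMJ : δ * tailMass (1 / α) J ≤ 1 * (1 / 2) :=
    mul_le_mul (by linarith) ((tailMass_anti ha hmJ).trans hmass) (tailMass_nonneg _ J) zero_le_one
  obtain ⟨P₀, hP₀⟩ := exists_pReal_eq_powerLaw ha (m := m) (J := J) le_rfl (by linarith)
  obtain ⟨P₁, hP₁⟩ := exists_pReal_eq_powerLaw ha (m := m) (J := J) hδ.le (by linarith)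
  have hK0 : 0 * √J ≤ K := by
    rw [zero_mul]
    exact le_trans (by positivity) hK
  have hsep : {ω | freq ω 0 ≠ 0 ∧ 3 * missingMass (powerBlock (1 / α) m J) 2 ω <
      missingMass (powerTail (1 / α) J') 2 ω} ⊆
      exceedance α C est h P₀ ((1 + 0) ^ α) ∪ exceedance α C est h P₁ ((1 + δ) ^ α) := by
    rintro ω ⟨hω, hrare⟩
    obtain ⟨hpos, hlt⟩ := likelihoodRatio_powerLaw_separated ha hm hmJ hJJ' hδ hδ5 hω hrare
    rw [← hP₁] at hpos
    rw [← hP₀, ← hP₁] at hlt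
    exact mem_exceedance_union_of_separated (by lia) (one_le_rpow (by simp) hα.1.le)
      (one_le_rpow (by linarith) hα.1.le) htol (by linarith) hpos hlt
  refine quarter_le_worstCaseExceedance
    (inSigmaClass_powerLaw hα hβ hβα hC le_rfl hm hK0 hC' hP₀)
    (inSigmaClass_powerLaw hα hβ hβα hC hδ.le hm hK hC' hP₁)
    (le_max_measureReal_of_subset_union hsep (τ := 1 / 4) ?_ ?_)
  · norm_num only
    exact three_quarters_le_sampleMeasure_powerLaw ha hn hm hmJ hJJ' hmass hJn hJ'n hP₀
  · have hdist := abs_le.1 (abs_sampleMeasure_powerLaw_sub_le ha hm hmJ hmass hP₀ hP₁ hχ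
      (exceedance α C est h P₁ ((1 + δ) ^ α)))
    linarith

/-- The relative size of the perturbation of the power tail beyond `J`: the order `J ^ (-1 / 2)` is
the largest at which the laws of the sample before and after the perturbation remain close when
`n ≍ J ^ a`. -/
def tailShift (a : ℝ) (J : ℕ) : ℝ := √((a - 1) / J) / 32

lemma tailShift_pos (ha : 1 < a) (hJ : 1 ≤ J) : 0 < tailShift a J := by
  have : 0 < a - 1 := by linarith
  unfold tailShift
  positivity

lemma tailShift_lt (hJ : 1 ≤ J) (haJ : a - 1 ≤ J) : tailShift a J < 1 / 5 := by
  have : √((a - 1) / J) ≤ 1 := Real.sqrt_le_one.2 (div_le_one_of_le₀ haJ (by positivity))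
  unfold tailShift
  linarith

lemma tailShift_mul_sqrt (hJ : 1 ≤ J) (a : ℝ) : tailShift a J * √J = √(a - 1) / 32 := by
  rw [tailShift, sqrt_div' _ (by positivity)]
  field_simp

lemma mul_tailShift_sq_mul_tailMass_le (ha : 1 < a) (hJ : 1 ≤ J) (haJ : a - 1 ≤ J)
    (hJn : 1 / 48 * n ≤ (J : ℝ) ^ a) : n * (2 * tailShift a J ^ 2 * tailMass a J) ≤ 3 / 16 := by
  have hJ0 : (0 : ℝ) < J := by exact_mod_cast hJ
  have ha0 : 0 < a - 1 := by linarith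
  have hpow : (J : ℝ) ^ a * (J : ℝ) ^ (1 - a) = J := by
    rw [← rpow_add hJ0, add_sub_cancel, Real.rpow_one]
  calc n * (2 * tailShift a J ^ 2 * tailMass a J)
      = (a - 1) / (512 * J) * (n * tailMass a J) := by
        rw [tailShift, div_pow, sq_sqrt (by positivity)]
        ring
    _ ≤ (a - 1) / (512 * J) * (48 * (J : ℝ) ^ a * (2 * ((J : ℝ) ^ (1 - a) / (a - 1)))) := by
        gcongr
        · exact tailMass_nonneg a J
        · linarith
        · exact tailMass_le_two_mul ha hJ haJ
    _ = 3 / 16 * ((J : ℝ) ^ a * (J : ℝ) ^ (1 - a) / J) := by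
        field_simp
        norm_num
    _ = 3 / 16 := by rw [hpow, div_self hJ0.ne', mul_one]

lemma tolerance_le_tailShift_div (hα : 0 < α) (hα1 : α < 1) (hC : C ≤ (1 - α) / 96) (hJ : 1 ≤ J)
    (hJn : J ≤ (n : ℝ) ^ α) : tolerance α C n ≤ tailShift (1 / α) J / 5 := by
  have hJ0 : (0 : ℝ) < J := by exact_mod_cast hJ
  have : 0 < (n : ℝ) ^ α := hJ0.trans_le hJn
  have : 0 < 1 - α := by linarith
  have hshift : tailShift (1 / α) J / 5 = √((1 - α) / (160 ^ 2 * α * J)) := by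
    rw [show (1 - α) / (160 ^ 2 * α * J) = (1 / α - 1) / J / 160 ^ 2 by field_simp,
      sqrt_div' _ (by norm_num), sqrt_sq (by norm_num), tailShift, div_div]
    norm_num
  rw [hshift]
  refine (tolerance_le_sqrt hα C n).trans (sqrt_le_sqrt ?_)
  calc C / (384 * α * (n : ℝ) ^ α) ≤ (1 - α) / 96 / (384 * α * J) := by gcongr
    _ = (1 - α) / (96 * 384 * α * J) := by field_simp
    _ ≤ (1 - α) / (160 ^ 2 * α * J) := by
        gcongr
        norm_num

lemma eventually_quarter_le_worstCaseExceedance (hα : α ∈ Set.Ioo (0 : ℝ) 1) (hβ : 0 < β)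
    (hβα : β ≤ α / 2) :
    ∃ Cab : ℝ, ∀ᶠ n : ℕ in atTop, ∀ C ≤ (1 - α) / 96, ∀ C' ≥ Cab, ∀ (est : (Fin n → ℕ) → ℝ)
      (h : ℝ → ℝ), 1 / 4 ≤ worstCaseExceedance α β C C' est h := by
  have ha : 1 < 1 / α := one_lt_one_div hα.1 hα.2
  have hinv : 0 < 1 / α := by linarith
  obtain ⟨m, hmass, hm⟩ := (((tendsto_tailMass ha).eventually_le_const one_half_pos).and
    (eventually_ge_atTop 1)).exists
  refine ⟨m + 1 + √(1 / α - 1) / 32, ?_⟩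
  filter_upwards [eventually_ge_atTop 4,
    eventually_exists_rpow_mem_Icc hinv (by norm_num) (by norm_num : (1 / 48 : ℝ) < 1 / 32)
      (max m ⌈1 / α - 1⌉₊),
    eventually_exists_rpow_mem_Icc hinv (by norm_num) (by norm_num : (16 : ℝ) < 32) 0]
  intro n hn ⟨J, hJ, hJn⟩ ⟨J', _, hJ'n⟩ C hC C' hC' est h
  have hmJ : m ≤ J := (le_max_left _ _).trans hJ
  have hJ1 : 1 ≤ J := hm.trans hmJ
  have haJ : 1 / α - 1 ≤ J := Nat.ceil_le.1 ((le_max_right _ _).trans hJ)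
  have hJpow : (J : ℝ) ≤ (n : ℝ) ^ α := by
    rw [← Real.rpow_inv_le_iff_of_pos (by positivity) (by positivity) hα.1, ← one_div]
    linarith [hJn.2, (Nat.cast_nonneg n : (0 : ℝ) ≤ n)]
  exact quarter_le_worstCaseExceedance_of_cutoffs hα hβ hβα (by linarith [hα.1]) hn hm hmass hmJ
    hJn.2 hJ'n (tailShift_pos ha hJ1) (tailShift_lt hJ1 haJ)
    (mul_tailShift_sq_mul_tailMass_le ha hJ1 haJ hJn.1) (tailShift_mul_sqrt hJ1 _).le hC'
    (tolerance_le_tailShift_div hα.1 hα.2 hC hJ1 hJpow) est h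

end LargeSamples

lemma one_div_mul_pi_mul_Gamma_le {α : ℝ} (hα : α ∈ Set.Ioo (0 : ℝ) 1) :
    1 / (64 * π * Gamma (1 - α)) ≤ (1 - α) / 96 := by
  have hα1 : 0 < 1 - α := by linarith [hα.2]
  calc 1 / (64 * π * Gamma (1 - α)) ≤ 1 / (64 * 3 * (1 / (2 * (1 - α)))) := by
        gcongr
        · exact pi_gt_three.le
        · exact one_div_two_mul_le_Gamma hα
    _ = (1 - α) / 96 := by
        field_simp
        norm_num

lemma likelihoodRatio_minimax_lower_bound_general {α β : ℝ} (hα : α ∈ Set.Ioo (0 : ℝ) 1)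
    (hβ : 0 < β) (hβα : β ≤ α / 2) :
    ∃ Cab : ℝ, ∀ n : ℕ, 1 ≤ n → ∀ C ∈ Set.Ioc 0 ((1 - α) / 96), ∀ C' ≥ Cab,
      ∀ (est : (Fin n → ℕ) → ℝ) (h : ℝ → ℝ), 1 / 4 ≤ worstCaseExceedance α β C C' est h := by
  obtain ⟨C₁, hlarge⟩ := eventually_quarter_le_worstCaseExceedance hα hβ hβα
  obtain ⟨N, hN⟩ := eventually_atTop.1 hlarge
  obtain ⟨C₂, hsmall⟩ := exists_quarter_le_worstCaseExceedance_of_le hα hβ hβα N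
  refine ⟨max C₁ C₂, fun n hn C hC C' hC' est h => ?_⟩
  rcases le_total N n with hNn | hnN
  · exact hN n hNn C hC.2 C' ((le_max_left _ _).trans hC') est h
  · exact hsmall n hn hnN C (by linarith [hα.1, hC.2]) C' ((le_max_right _ _).trans hC') est h

/-- Minimax lower bound, over the second-order regularly varying class `Σ(α,β,C,C')`, for the
estimation of the likelihood ratio of the rare-type match problem. -/
theorem likelihoodRatio_minimax_lower_bound
    (α β : ℝ) (hα : α ∈ Set.Ioo (0 : ℝ) 1) (hβ : 0 < β) (hβα : β < α / 2) :
    ∃ Cab : ℝ, ∀ n : ℕ, max 4 ((12 * α) ^ (1 / (1 - α))) ≤ (n : ℝ) →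
      ∀ C : ℝ, 0 < C → C ≤ 1 / (64 * Real.pi * Real.Gamma (1 - α)) →
      ∀ C' : ℝ, Cab < C' →
      ∀ est : (Fin n → ℕ) → ℝ, Measurable est →
      ∀ h : ℝ → ℝ, Measurable h →
      (1 / 4 : ℝ≥0∞) ≤
        ⨆ (P : PMF ℕ) (Lα : ℝ) (_ : inSigmaClass α β C C' P Lα),
          sampleMeasure P n
            {ω | Real.sqrt ((n : ℝ) ^ α * Lα) *
                  mloss h (est ω) (likelihoodRatio (pReal P) ω) >
                Real.sqrt C * min (1 / (8 * Real.sqrt (6 * α))) ((n : ℝ) ^ (α / 2) / 2)} := by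
  obtain ⟨Cab, hCab⟩ := likelihoodRatio_minimax_lower_bound_general hα hβ hβα.le
  refine ⟨Cab, fun n hn C hC0 hC C' hC' est _ h _ => ?_⟩
  have hn4 : (4 : ℝ) ≤ n := (le_max_left _ _).trans hn
  exact hCab n (by exact_mod_cast (by norm_num : (1 : ℝ) ≤ 4).trans hn4) C
    ⟨hC0, hC.trans (one_div_mul_pi_mul_Gamma_le hα)⟩ C' hC'.le est h

end
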